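/- arXiv:2207.01785 — 2 statements merged into one kernel-verified Lean document; each statement's English description precedes it below -/
import Mathlib

section
/- Let R be a commutative Noetherian ring, S a Serre subcategory of the category of R-modules, and 𝔟 ⊆ 𝔞 ideals of R. Let M be an R-module and let s ≥ 0 and t ≥ 0 be integers such that: (1) Ext^{s+t}_R(R/𝔞, M) belongs to S; (2) Ext^{s+1+i}_R(R/𝔞, H^{t−i}_𝔟(M)) belongs to S for all integers 1 ≤ i ≤ t; (3) Ext^{s−1−i}_R(R/𝔞, H^{t+i}_𝔟(M)) belongs to S for all integers 1 ≤ i ≤ s−1. Then the R-module Ext^{s}_R(R/𝔞, H^{t}_𝔟(M)) belongs to S. -/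
open CategoryTheory

universe u

/-- The `R`-module `Ext^i_R(N, M)` for two `R`-modules (objects of `ModuleCat R`). -/
noncomputable def extObj {R : Type u} [CommRing R] (N M : ModuleCat.{u} R) (i : ℕ) :
    ModuleCat.{u} R :=
  ((Ext R (ModuleCat.{u} R) i).obj (Opposite.op N)).obj M

/-- The `R`-module `Ext^i_R(R/𝔞, M)`. -/
noncomputable def extIdeal {R : Type u} [CommRing R] (𝔞 : Ideal R) (i : ℕ)
    (M : ModuleCat.{u} R) : ModuleCat.{u} R :=
  extObj (ModuleCat.of R (R ⧸ 𝔞)) M i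

/-- A Serre subcategory of the category of `R`-modules: a class of `R`-modules such that
for every short exact sequence `0 → L → M → N → 0`, `M` belongs to the class if and only if
both `L` and `N` belong to it. -/
structure SerreClass (R : Type u) [CommRing R] : Type (u + 1) where
  mem : ∀ (M : Type u) [AddCommGroup M] [Module R M], Prop
  mem_iff_of_ses :
    ∀ {L M N : Type u} [AddCommGroup L] [Module R L] [AddCommGroup M] [Module R M]
      [AddCommGroup N] [Module R N] (f : L →ₗ[R] M) (g : M →ₗ[R] N),
      Function.Injective f → Function.Surjective g → LinearMap.range f = LinearMap.ker g →
      (mem M ↔ (mem L ∧ mem N))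

/-!
The theorem is usually read off from the spectral sequence
`Ext^p(N, H^q_𝔟(M)) ⇒ Ext^{p+q}(N, M)` for a `𝔟`-torsion module `N`. Here it is proved by dimension
shifting in `t`. Choose an embedding of `M` into an injective module `E` and let `C` be the cokernel
of `M/Γ_𝔟(M) → E/Γ_𝔟(E)`. Since `Γ_𝔟(E)` is again injective (Artin–Rees) and both `Hom(N, -)` and
`Γ_𝔟` vanish on modules without `𝔟`-torsion, `E/Γ_𝔟(E)` is acyclic for `Ext(N, -)` and for `H_𝔟`.
As `H_𝔟` of a torsion module is concentrated in degree `0`, this gives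
`H^q_𝔟(C) = H^{q+1}_𝔟(M)` and `Ext^n(N, C) = Ext^{n+1}(N, M/Γ_𝔟(M))`, and the long exact sequence of
`0 → Γ_𝔟(M) → M → M/Γ_𝔟(M) → 0` passes from `Ext(N, M)` to `Ext(N, M/Γ_𝔟(M))`.
-/

open Limits Opposite

section LeftDerivedSequence

open HomologicalComplex (homologyMap)

variable {C D : Type*} [Category* C] [Category* D] [Abelian C] [Abelian D]

section

variable [EnoughProjectives C] (F G : C ⥤ D) [F.Additive] [G.Additive] (n : ℕ)

/-- The left derived functors of `F`, computed by the chosen projective resolutions. -/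
noncomputable def leftDerivedObjIso (X : C) : (F.leftDerived n).obj X ≅
    ((F.mapHomologicalComplex _).obj (projectiveResolution X).complex).homology n :=
  (projectiveResolution X).isoLeftDerivedObj F n

lemma leftDerivedObjIso_hom_naturality {X Y : C} (f : X ⟶ Y) :
    (F.leftDerived n).map f ≫ (leftDerivedObjIso F n Y).hom =
      (leftDerivedObjIso F n X).hom ≫ homologyMap ((F.mapHomologicalComplex _).map
        (ProjectiveResolution.lift f (projectiveResolution X) (projectiveResolution Y))) n :=
  ProjectiveResolution.isoLeftDerivedObj_hom_naturality f _ _ _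
    (ProjectiveResolution.lift_commutes_zero f _ _) F n

lemma leftDerivedObjIso_inv_naturality {X Y : C} (f : X ⟶ Y) :
    (leftDerivedObjIso F n X).inv ≫ (F.leftDerived n).map f =
      homologyMap ((F.mapHomologicalComplex _).map
        (ProjectiveResolution.lift f (projectiveResolution X) (projectiveResolution Y))) n ≫
          (leftDerivedObjIso F n Y).inv := by
  rw [Iso.inv_comp_eq, ← Category.assoc, Iso.eq_comp_inv, leftDerivedObjIso_hom_naturality]

variable {F G}

lemma leftDerived_app_comp_leftDerivedObjIso_hom (α : F ⟶ G) (X : C) :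
    (NatTrans.leftDerived α n).app X ≫ (leftDerivedObjIso G n X).hom =
      (leftDerivedObjIso F n X).hom ≫
        homologyMap ((NatTrans.mapHomologicalComplex α _).app _) n := by
  rw [← Iso.eq_comp_inv, Category.assoc]
  exact ProjectiveResolution.leftDerived_app_eq α (projectiveResolution X) n

lemma leftDerivedObjIso_inv_comp_leftDerived_app (α : F ⟶ G) (X : C) :
    (leftDerivedObjIso F n X).inv ≫ (NatTrans.leftDerived α n).app X =
      homologyMap ((NatTrans.mapHomologicalComplex α _).app _) n ≫
        (leftDerivedObjIso G n X).inv := by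
  rw [Iso.inv_comp_eq, ← Category.assoc, Iso.eq_comp_inv,
    leftDerived_app_comp_leftDerivedObjIso_hom]

lemma leftDerived_zero : NatTrans.leftDerived (0 : F ⟶ G) n = 0 := by
  ext X
  have h : (NatTrans.mapHomologicalComplex (0 : F ⟶ G) (ComplexShape.down ℕ)).app
      (projectiveResolution X).complex = 0 := rfl
  rw [← cancel_mono (leftDerivedObjIso G n X).hom, leftDerived_app_comp_leftDerivedObjIso_hom, h,
    HomologicalComplex.homologyMap_zero]
  simp

lemma leftDerived_zero_comp_fromLeftDerivedZero (α : F ⟶ G) :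
    NatTrans.leftDerived α 0 ≫ G.fromLeftDerivedZero = F.fromLeftDerivedZero ≫ α := by
  ext X
  let P := projectiveResolution X
  let φ := (NatTrans.mapHomologicalComplex α (ComplexShape.down ℕ)).app P.complex
  have opcycles_square : HomologicalComplex.opcyclesMap φ 0 ≫ P.fromLeftDerivedZero' G =
      P.fromLeftDerivedZero' F ≫ α.app X := by
    rw [← cancel_epi (HomologicalComplex.pOpcycles _ _),
      HomologicalComplex.p_opcyclesMap_assoc, P.pOpcycles_comp_fromLeftDerivedZero',
      P.pOpcycles_comp_fromLeftDerivedZero'_assoc]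
    exact (α.naturality _).symm
  have fromLeftDerivedZero_app (H : C ⥤ D) [H.Additive] : H.fromLeftDerivedZero.app X =
      (leftDerivedObjIso H 0 X).hom ≫ (ChainComplex.isoHomologyι₀ _).hom ≫
        P.fromLeftDerivedZero' H := P.fromLeftDerivedZero_eq H
  have homology_square : homologyMap φ 0 ≫ (ChainComplex.isoHomologyι₀ _).hom =
      (ChainComplex.isoHomologyι₀ _).hom ≫ HomologicalComplex.opcyclesMap φ 0 := by
    simp
  rw [NatTrans.comp_app, NatTrans.comp_app, fromLeftDerivedZero_app, fromLeftDerivedZero_app,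
    ← Category.assoc, leftDerived_app_comp_leftDerivedObjIso_hom, Category.assoc,
    reassoc_of% homology_square, opcycles_square, Category.assoc, Category.assoc]

end

variable (S : ShortComplex (C ⥤ D))

/-- The sequence of functors `0 ⟶ S.X₁ ⟶ S.X₂ ⟶ S.X₃ ⟶ 0` is exact on projective objects. -/
def ShortExactOnProjectives : Prop :=
  ∀ (P : C) [Projective P], (S.map ((evaluation C D).obj P)).ShortExact

variable [S.X₁.Additive] [S.X₂.Additive] [S.X₃.Additive]

/-- The sequence of functors `S`, applied degreewise to the chain complex `K`. -/
noncomputable abbrev mapChainComplex (K : ChainComplex C ℕ) : ShortComplex (ChainComplex D ℕ) where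
  X₁ := (S.X₁.mapHomologicalComplex _).obj K
  X₂ := (S.X₂.mapHomologicalComplex _).obj K
  X₃ := (S.X₃.mapHomologicalComplex _).obj K
  f := (NatTrans.mapHomologicalComplex S.f _).app K
  g := (NatTrans.mapHomologicalComplex S.g _).app K
  zero := by
    ext i
    exact congr_app S.zero (K.X i)

/-- The functoriality of `mapChainComplex S K` in the chain complex `K`. -/
noncomputable abbrev mapChainComplexMap {K L : ChainComplex C ℕ} (φ : K ⟶ L) :
    mapChainComplex S K ⟶ mapChainComplex S L where
  τ₁ := (S.X₁.mapHomologicalComplex _).map φ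
  τ₂ := (S.X₂.mapHomologicalComplex _).map φ
  τ₃ := (S.X₃.mapHomologicalComplex _).map φ

variable [EnoughProjectives C]

/-- The sequence `S.X₁ ⟶ S.X₂ ⟶ S.X₃` on `n`-th left derived functors. -/
noncomputable abbrev leftDerivedSequence (n : ℕ) : ShortComplex (C ⥤ D) where
  X₁ := S.X₁.leftDerived n
  X₂ := S.X₂.leftDerived n
  X₃ := S.X₃.leftDerived n
  f := NatTrans.leftDerived S.f n
  g := NatTrans.leftDerived S.g n
  zero := by rw [← NatTrans.leftDerived_comp, S.zero, leftDerived_zero]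

namespace ShortExactOnProjectives

variable {S} (hS : ShortExactOnProjectives S) (n : ℕ)
include hS

omit [EnoughProjectives C] in
lemma shortExact_mapChainComplex {X : C} (P : ProjectiveResolution X) :
    (mapChainComplex S P.complex).ShortExact :=
  HomologicalComplex.shortExact_of_degreewise_shortExact _ fun i ↦ hS (P.complex.X i)

/-- The connecting morphism of the long exact sequence of left derived functors. -/
noncomputable def leftDerivedδ : S.X₃.leftDerived (n + 1) ⟶ S.X₁.leftDerived n where
  app X := (leftDerivedObjIso S.X₃ (n + 1) X).hom ≫
    (hS.shortExact_mapChainComplex (projectiveResolution X)).δ (n + 1) n rfl ≫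
      (leftDerivedObjIso S.X₁ n X).inv
  naturality X Y f := by
    have hδ := HomologicalComplex.HomologySequence.δ_naturality
      (mapChainComplexMap S
        (ProjectiveResolution.lift f (projectiveResolution X) (projectiveResolution Y)))
      (hS.shortExact_mapChainComplex _) (hS.shortExact_mapChainComplex _) (n + 1) n
      rfl
    rw [Category.assoc, Category.assoc, leftDerivedObjIso_inv_naturality, reassoc_of% hδ,
      ← Category.assoc, leftDerivedObjIso_hom_naturality, Category.assoc]

lemma leftDerivedδ_app_comp_leftDerivedObjIso_hom (X : C) :
    (hS.leftDerivedδ n).app X ≫ (leftDerivedObjIso S.X₁ n X).hom =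
      (leftDerivedObjIso S.X₃ (n + 1) X).hom ≫
        (hS.shortExact_mapChainComplex (projectiveResolution X)).δ (n + 1) n rfl := by
  simp only [leftDerivedδ, Category.assoc, Iso.inv_hom_id, Category.comp_id]

lemma leftDerived_g_comp_δ : NatTrans.leftDerived S.g (n + 1) ≫ hS.leftDerivedδ n = 0 := by
  ext X
  have hδ := (hS.shortExact_mapChainComplex (projectiveResolution X)).comp_δ (n + 1) n
    rfl
  rw [NatTrans.comp_app, leftDerivedδ, ← Category.assoc,
    leftDerived_app_comp_leftDerivedObjIso_hom, Category.assoc, reassoc_of% hδ, zero_comp,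
    comp_zero, zero_app]

lemma leftDerivedδ_comp_f : hS.leftDerivedδ n ≫ NatTrans.leftDerived S.f n = 0 := by
  ext X
  have hδ := (hS.shortExact_mapChainComplex (projectiveResolution X)).δ_comp (n + 1) n
    rfl
  rw [NatTrans.comp_app, leftDerivedδ, Category.assoc, Category.assoc,
    leftDerivedObjIso_inv_comp_leftDerived_app, reassoc_of% hδ, zero_comp, comp_zero, zero_app]

lemma leftDerived_exact₁ (X : C) :
    ((ShortComplex.mk _ _ (hS.leftDerivedδ_comp_f n)).map ((evaluation C D).obj X)).Exact :=
  (ShortComplex.exact_iff_of_iso (ShortComplex.isoMk (leftDerivedObjIso _ _ X)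
    (leftDerivedObjIso _ _ X) (leftDerivedObjIso _ _ X)
    (hS.leftDerivedδ_app_comp_leftDerivedObjIso_hom n X).symm
    (leftDerived_app_comp_leftDerivedObjIso_hom n S.f X).symm)).2
    ((hS.shortExact_mapChainComplex (projectiveResolution X)).homology_exact₁ _ _
      rfl)

lemma leftDerived_exact₂ (X : C) :
    ((leftDerivedSequence S n).map ((evaluation C D).obj X)).Exact :=
  (ShortComplex.exact_iff_of_iso (ShortComplex.isoMk (leftDerivedObjIso _ _ X)
    (leftDerivedObjIso _ _ X) (leftDerivedObjIso _ _ X)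
    (leftDerived_app_comp_leftDerivedObjIso_hom n S.f X).symm
    (leftDerived_app_comp_leftDerivedObjIso_hom n S.g X).symm)).2
    ((hS.shortExact_mapChainComplex (projectiveResolution X)).homology_exact₂ n)

lemma leftDerived_exact₃ (X : C) :
    ((ShortComplex.mk _ _ (hS.leftDerived_g_comp_δ n)).map ((evaluation C D).obj X)).Exact :=
  (ShortComplex.exact_iff_of_iso (ShortComplex.isoMk (leftDerivedObjIso _ _ X)
    (leftDerivedObjIso _ _ X) (leftDerivedObjIso _ _ X)
    (leftDerived_app_comp_leftDerivedObjIso_hom (n + 1) S.g X).symm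
    (hS.leftDerivedδ_app_comp_leftDerivedObjIso_hom n X).symm)).2
    ((hS.shortExact_mapChainComplex (projectiveResolution X)).homology_exact₃ _ _
      rfl)

end ShortExactOnProjectives

end LeftDerivedSequence

section EffaceableDeltaFunctor

variable (C D : Type*) [Category* C] [Category* D] [Abelian C] [Abelian D]

/-- A cohomological δ-functor in degrees `n ≥ 0` which preserves monomorphisms in degree `0` and
vanishes on injective objects in positive degrees. The naturality of the connecting morphisms in
the short exact sequence is not part of the structure. -/
structure EffaceableDeltaFunctor where
  functor (n : ℕ) : C ⥤ D
  preservesZeroMorphisms (n : ℕ) : (functor n).PreservesZeroMorphisms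
  δ {S : ShortComplex C} (hS : S.ShortExact) (n : ℕ) :
    (functor n).obj S.X₃ ⟶ (functor (n + 1)).obj S.X₁
  δ_comp_map_f {S : ShortComplex C} (hS : S.ShortExact) (n : ℕ) :
    δ hS n ≫ (functor (n + 1)).map S.f = 0
  map_g_comp_δ {S : ShortComplex C} (hS : S.ShortExact) (n : ℕ) :
    (functor n).map S.g ≫ δ hS n = 0
  exact₁ {S : ShortComplex C} (hS : S.ShortExact) (n : ℕ) :
    (ShortComplex.mk _ _ (δ_comp_map_f hS n)).Exact
  exact₂ {S : ShortComplex C} (hS : S.ShortExact) (n : ℕ) : (S.map (functor n)).Exact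
  exact₃ {S : ShortComplex C} (hS : S.ShortExact) (n : ℕ) :
    (ShortComplex.mk _ _ (map_g_comp_δ hS n)).Exact
  preservesMonomorphisms : (functor 0).PreservesMonomorphisms
  isZero_of_injective (n : ℕ) (E : C) [Injective E] : IsZero ((functor (n + 1)).obj E)

namespace EffaceableDeltaFunctor

attribute [instance] preservesZeroMorphisms preservesMonomorphisms

variable {C D} (T : EffaceableDeltaFunctor C D)

/-- The δ-functor obtained by applying an exact functor. -/
def comp {D' : Type*} [Category* D'] [Abelian D'] (L : D ⥤ D') [L.PreservesZeroMorphisms]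
    [PreservesFiniteLimits L] [PreservesFiniteColimits L] : EffaceableDeltaFunctor C D' where
  functor n := T.functor n ⋙ L
  preservesZeroMorphisms _ := inferInstance
  δ hS n := L.map (T.δ hS n)
  δ_comp_map_f hS n := ((ShortComplex.mk _ _ (T.δ_comp_map_f hS n)).map L).zero
  map_g_comp_δ hS n := ((ShortComplex.mk _ _ (T.map_g_comp_δ hS n)).map L).zero
  exact₁ hS n := (T.exact₁ hS n).map L
  exact₂ hS n := (T.exact₂ hS n).map L
  exact₃ hS n := (T.exact₃ hS n).map L
  preservesMonomorphisms := inferInstance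
  isZero_of_injective n E _ := L.map_isZero (T.isZero_of_injective n E)

section

variable {S : ShortComplex C} (hS : S.ShortExact) (n : ℕ)
include hS

lemma isIso_δ (h₀ : IsZero ((T.functor n).obj S.X₂)) (h₁ : IsZero ((T.functor (n + 1)).obj S.X₂)) :
    IsIso (T.δ hS n) :=
  have : Mono (T.δ hS n) := (T.exact₃ hS n).mono_g (h₀.eq_of_src _ _)
  have : Epi (T.δ hS n) := (T.exact₁ hS n).epi_f (h₁.eq_of_tgt _ _)
  isIso_of_mono_of_epi _

lemma isIso_map_g (h₀ : IsZero ((T.functor n).obj S.X₁))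
    (h₁ : IsZero ((T.functor (n + 1)).obj S.X₁)) : IsIso ((T.functor n).map S.g) :=
  have : Mono ((T.functor n).map S.g) := (T.exact₂ hS n).mono_g (h₀.eq_of_src _ _)
  have : Epi ((T.functor n).map S.g) := (T.exact₃ hS n).epi_f (h₁.eq_of_tgt _ _)
  isIso_of_mono_of_epi _

lemma isIso_zero_map_f (h : IsZero ((T.functor 0).obj S.X₃)) : IsIso ((T.functor 0).map S.f) :=
  have := hS.mono_f
  have : Epi ((T.functor 0).map S.f) := (T.exact₂ hS 0).epi_f (h.eq_of_tgt _ _)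
  isIso_of_mono_of_epi _

lemma isZero_X₃ (h₂ : IsZero ((T.functor n).obj S.X₂))
    (h₁ : IsZero ((T.functor (n + 1)).obj S.X₁)) : IsZero ((T.functor n).obj S.X₃) :=
  (T.exact₃ hS n).isZero_of_both_zeros (h₂.eq_of_src _ _) (h₁.eq_of_tgt _ _)

lemma isZero_succ_X₁_of_epi [Epi ((T.functor n).map S.g)]
    (h : IsZero ((T.functor (n + 1)).obj S.X₂)) : IsZero ((T.functor (n + 1)).obj S.X₁) :=
  (T.exact₁ hS n).isZero_of_both_zeros
    ((cancel_epi ((T.functor n).map S.g)).1 ((T.map_g_comp_δ hS n).trans comp_zero.symm))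
    (h.eq_of_tgt _ _)

end

end EffaceableDeltaFunctor

end EffaceableDeltaFunctor

section ExtDeltaFunctor

lemma exact_of_evaluation {J A : Type*} [Category* J] [Category* A] [Abelian A]
    {S : ShortComplex (J ⥤ A)} (hS : ∀ j, (S.map ((evaluation _ _).obj j)).Exact) : S.Exact := by
  rw [ShortComplex.exact_iff_isZero_homology, Functor.isZero_iff]
  exact fun j ↦ ((ShortComplex.exact_iff_isZero_homology _).1 (hS j)).of_iso
    (S.mapHomologyIso ((evaluation _ _).obj j)).symm

universe w v

variable (R : Type w) [Ring R] {C : Type u} [Category.{v} C] [Abelian C] [Linear R C]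

instance : (linearYoneda R C).Additive where
  map_add {X Y f g} := by
    ext Z φ
    exact Preadditive.comp_add _ _ _ φ f g

lemma linearYoneda_exact_of_mono {S : ShortComplex C} (hS : S.Exact) [Mono S.f] (X : Cᵒᵖ) :
    ((S.map (linearYoneda R C)).map ((evaluation _ _).obj X)).Exact := by
  rw [ShortComplex.moduleCat_exact_iff]
  intro (φ : X.unop ⟶ S.X₂) (hφ : φ ≫ S.g = 0)
  exact ⟨hS.lift φ hφ, hS.lift_f φ hφ⟩

lemma mono_linearYoneda_map_app {Y Z : C} (f : Y ⟶ Z) [Mono f] (X : Cᵒᵖ) :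
    Mono (((linearYoneda R C).map f).app X) := by
  rw [ModuleCat.mono_iff_injective]
  intro (φ : X.unop ⟶ Y) (ψ : X.unop ⟶ Y) (h : φ ≫ f = ψ ≫ f)
  exact (cancel_mono f).1 h

instance : (linearYoneda R C).PreservesMonomorphisms where
  preserves f _ :=
    have := mono_linearYoneda_map_app R f
    NatTrans.mono_of_mono_app _

lemma epi_linearYoneda_map_app {Y Z : C} (f : Y ⟶ Z) [Epi f] (P : C) [Projective P] :
    Epi (((linearYoneda R C).map f).app (op P)) := by
  rw [ModuleCat.epi_iff_surjective]
  intro (φ : P ⟶ Z)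
  exact ⟨Projective.factorThru φ f, Projective.factorThru_comp φ f⟩

lemma linearYonedaObj_exactAt_of_injective (K : ChainComplex C ℕ) (E : C) [Injective E] (n : ℕ)
    (hK : K.ExactAt (n + 1)) : (K.linearYonedaObj R E).ExactAt (n + 1) := by
  rw [HomologicalComplex.exactAt_iff' _ (n + 1 + 1) (n + 1) n (by simp) (by simp)] at hK
  rw [HomologicalComplex.exactAt_iff' _ n (n + 1) (n + 1 + 1) (by simp) (by simp),
    ShortComplex.moduleCat_exact_iff]
  intro (φ : K.X (n + 1) ⟶ E) (hφ : K.d (n + 1 + 1) (n + 1) ≫ φ = 0)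
  exact ⟨hK.descToInjective φ hφ, hK.comp_descToInjective φ hφ⟩

/-- The sequence `0 ⟶ Hom(-, S.X₃) ⟶ Hom(-, S.X₂) ⟶ Hom(-, S.X₁) ⟶ 0` of functors to the opposite of
the category of modules, whose left derived functors are the `Ext` functors. -/
abbrev rightOpLinearYonedaSequence (S : ShortComplex C) :
    ShortComplex (C ⥤ (ModuleCat.{v} R)ᵒᵖ) where
  X₁ := ((linearYoneda R C).obj S.X₃).rightOp
  X₂ := ((linearYoneda R C).obj S.X₂).rightOp
  X₃ := ((linearYoneda R C).obj S.X₁).rightOp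
  f := NatTrans.rightOp ((linearYoneda R C).map S.g)
  g := NatTrans.rightOp ((linearYoneda R C).map S.f)
  zero := congrArg NatTrans.rightOp (S.map (linearYoneda R C)).zero

lemma shortExactOnProjectives_rightOpLinearYonedaSequence {S : ShortComplex C}
    (hS : S.ShortExact) : ShortExactOnProjectives (rightOpLinearYonedaSequence R S) := fun P _ ↦
  have := hS.mono_f
  have := hS.epi_g
  have : ((S.map (linearYoneda R C)).map ((evaluation _ _).obj (op P))).ShortExact :=
    { exact := linearYoneda_exact_of_mono R hS.exact (op P)
      mono_f := mono_linearYoneda_map_app R S.f (op P)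
      epi_g := epi_linearYoneda_map_app R S.g P }
  this.op

variable [EnoughProjectives C]

instance (n : ℕ) : (Ext R C n).flip.PreservesZeroMorphisms where
  map_zero X Y := by
    have : (linearYoneda R C).map (0 : X ⟶ Y) = 0 := Functor.map_zero _ _ _
    exact (congrArg (fun α ↦ NatTrans.leftOp (NatTrans.leftDerived (NatTrans.rightOp α) n))
      this).trans (congrArg NatTrans.leftOp (leftDerived_zero n))

lemma isZero_flip_ext_succ_of_injective (n : ℕ) (E : C) [Injective E] :
    IsZero ((Ext R C (n + 1)).flip.obj E) :=
  (Functor.isZero_iff _).2 fun X ↦ IsZero.of_iso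
    ((HomologicalComplex.exactAt_iff_isZero_homology _ _).1
      (linearYonedaObj_exactAt_of_injective R _ E n
        ((projectiveResolution X.unop).complex_exactAt_succ n)))
    ((projectiveResolution X.unop).isoExt (n + 1) E)

instance (Y : C) :
    PreservesFiniteLimits ((linearYoneda R C).obj Y) :=
  have : PreservesFiniteLimits ((linearYoneda R C).obj Y ⋙ forget (ModuleCat R)) :=
    inferInstanceAs (PreservesFiniteLimits (yoneda.obj Y))
  preservesFiniteLimits_of_reflects_of_preserves _ (forget (ModuleCat R))

variable (C) in
/-- `Ext^0` is `Hom`, naturally in both variables. -/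
noncomputable def flipExtZeroIso : linearYoneda R C ≅ (Ext R C 0).flip :=
  NatIso.ofComponents (fun Y ↦
    have := preservesFiniteColimits_rightOp ((linearYoneda R C).obj Y)
    ((Functor.leftOpRightOpEquiv _ _).inverse.mapIso
      ((linearYoneda R C).obj Y).rightOp.leftDerivedZeroIsoSelf).unop)
    fun f ↦ (congrArg NatTrans.leftOp (leftDerived_zero_comp_fromLeftDerivedZero
      (NatTrans.rightOp ((linearYoneda R C).map f)))).symm

variable (C) in
/-- The functors `Y ↦ Ext^n(-, Y)`, as a δ-functor with values in presheaves of modules. -/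
noncomputable def extDeltaFunctor : EffaceableDeltaFunctor C (Cᵒᵖ ⥤ ModuleCat.{v} R) where
  functor n := (Ext R C n).flip
  preservesZeroMorphisms _ := inferInstance
  δ hS n := NatTrans.leftOp
    ((shortExactOnProjectives_rightOpLinearYonedaSequence R hS).leftDerivedδ n)
  δ_comp_map_f hS n := congrArg NatTrans.leftOp
    ((shortExactOnProjectives_rightOpLinearYonedaSequence R hS).leftDerived_g_comp_δ n)
  map_g_comp_δ hS n := congrArg NatTrans.leftOp
    ((shortExactOnProjectives_rightOpLinearYonedaSequence R hS).leftDerivedδ_comp_f n)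
  exact₁ hS n := exact_of_evaluation fun X ↦
    ((shortExactOnProjectives_rightOpLinearYonedaSequence R hS).leftDerived_exact₃ n X.unop).unop
  exact₂ hS n := exact_of_evaluation fun X ↦
    ((shortExactOnProjectives_rightOpLinearYonedaSequence R hS).leftDerived_exact₂ n X.unop).unop
  exact₃ hS n := exact_of_evaluation fun X ↦
    ((shortExactOnProjectives_rightOpLinearYonedaSequence R hS).leftDerived_exact₁ n X.unop).unop
  preservesMonomorphisms := .of_iso (flipExtZeroIso R C)
  isZero_of_injective n E _ := isZero_flip_ext_succ_of_injective R n E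

end ExtDeltaFunctor

section PowTorsion

variable {R : Type*} [CommRing R]

/-- The submodule `Γ_𝔟(M)` of elements of `M` killed by a power of the ideal `𝔟`. -/
def powTorsion (𝔟 : Ideal R) (M : Type*) [AddCommGroup M] [Module R M] : Submodule R M where
  carrier := {x | ∃ k : ℕ, ∀ r ∈ 𝔟 ^ k, r • x = 0}
  zero_mem' := ⟨0, fun r _ ↦ smul_zero r⟩
  add_mem' := by
    rintro x y ⟨k, hk⟩ ⟨l, hl⟩
    refine ⟨max k l, fun r hr ↦ ?_⟩
    rw [smul_add, hk r (Ideal.pow_le_pow_right (le_max_left k l) hr),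
      hl r (Ideal.pow_le_pow_right (le_max_right k l) hr), add_zero]
  smul_mem' := by
    rintro c x ⟨k, hk⟩
    exact ⟨k, fun r hr ↦ by rw [smul_comm, hk r hr, smul_zero]⟩

variable {𝔟 : Ideal R} {M N : Type*} [AddCommGroup M] [Module R M] [AddCommGroup N] [Module R N]

lemma powTorsion_le_comap (f : M →ₗ[R] N) : powTorsion 𝔟 M ≤ (powTorsion 𝔟 N).comap f := by
  rintro x ⟨k, hk⟩
  exact ⟨k, fun r hr ↦ by rw [← map_smul, hk r hr, map_zero]⟩

lemma comap_powTorsion_of_injective {f : M →ₗ[R] N} (hf : Function.Injective f) :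
    (powTorsion 𝔟 N).comap f = powTorsion 𝔟 M := by
  refine (powTorsion_le_comap f).antisymm' ?_
  rintro x ⟨k, hk⟩
  exact ⟨k, fun r hr ↦ hf (by rw [map_smul, hk r hr, map_zero])⟩

lemma map_mem_powTorsion (hM : powTorsion 𝔟 M = ⊤) (f : M →ₗ[R] N) (x : M) :
    f x ∈ powTorsion 𝔟 N :=
  powTorsion_le_comap f (hM ▸ Submodule.mem_top)

lemma powTorsion_eq_top_of_surjective (hM : powTorsion 𝔟 M = ⊤) {f : M →ₗ[R] N}
    (hf : Function.Surjective f) : powTorsion 𝔟 N = ⊤ :=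
  Submodule.eq_top_iff'.2 (hf.forall.2 (map_mem_powTorsion hM f))

lemma linearMap_eq_zero_of_powTorsion (hM : powTorsion 𝔟 M = ⊤) (hN : powTorsion 𝔟 N = ⊥)
    (f : M →ₗ[R] N) : f = 0 :=
  LinearMap.ext fun x ↦ (Submodule.eq_bot_iff _).1 hN _ (map_mem_powTorsion hM f x)

lemma powTorsion_powTorsion : powTorsion 𝔟 (powTorsion 𝔟 M) = ⊤ := by
  rw [← comap_powTorsion_of_injective (powTorsion 𝔟 M).injective_subtype,
    Submodule.comap_subtype_self]

lemma powTorsion_quotient_of_pow_le {I : Ideal R} (k : ℕ) (h : 𝔟 ^ k ≤ I) :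
    powTorsion 𝔟 (R ⧸ I) = ⊤ := by
  refine Submodule.eq_top_iff'.2 (Submodule.Quotient.mk_surjective I |>.forall.2 fun x ↦ ?_)
  refine ⟨k, fun r hr ↦ ?_⟩
  rw [← Submodule.Quotient.mk_smul, Submodule.Quotient.mk_eq_zero]
  exact I.mul_mem_right x (h hr)

lemma exists_pow_smul_eq_zero_of_fg {P : Submodule R M} (hP : P.FG) (h : P ≤ powTorsion 𝔟 M) :
    ∃ k : ℕ, ∀ r ∈ 𝔟 ^ k, ∀ x ∈ P, r • x = 0 := by
  obtain ⟨s, rfl⟩ := hP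
  choose! k hk using fun x (hx : x ∈ s) ↦ h (Submodule.subset_span hx)
  refine ⟨s.sup k, fun r hr x hx ↦ ?_⟩
  induction hx using Submodule.span_induction with
  | mem x hx => exact hk x hx r (Ideal.pow_le_pow_right (Finset.le_sup hx) hr)
  | zero => exact smul_zero r
  | add x y _ _ hx hy => rw [smul_add, hx, hy, add_zero]
  | smul c x _ hx => rw [smul_comm, hx, smul_zero]

variable [IsNoetherianRing R]

lemma powTorsion_quotient_powTorsion (𝔟 : Ideal R) (M : Type*) [AddCommGroup M] [Module R M] :
    powTorsion 𝔟 (M ⧸ powTorsion 𝔟 M) = ⊥ := by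
  refine (Submodule.eq_bot_iff _).2 ((Submodule.Quotient.mk_surjective _).forall.2 ?_)
  rintro x ⟨k, hk⟩
  have pow_smul_mem : Submodule.map (LinearMap.toSpanSingleton R M x) (𝔟 ^ k) ≤ powTorsion 𝔟 M := by
    rintro _ ⟨r, hr, rfl⟩
    exact (Submodule.Quotient.mk_eq_zero _).1 (hk r hr)
  obtain ⟨l, hl⟩ := exists_pow_smul_eq_zero_of_fg
    ((IsNoetherian.noetherian (𝔟 ^ k)).map (LinearMap.toSpanSingleton R M x)) pow_smul_mem
  rw [Submodule.Quotient.mk_eq_zero]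
  refine ⟨l + k, fun r hr ↦ ?_⟩
  rw [pow_add] at hr
  induction hr using Submodule.mul_induction_on' with
  | mem_mul_mem a ha c hc =>
    rw [mul_smul]
    exact hl a ha _ ⟨c, hc, LinearMap.toSpanSingleton_apply R M x c⟩
  | add a _ c _ ha hc => rw [add_smul, ha, hc, add_zero]

lemma exists_pow_inf_le_pow_smul (𝔟 I : Ideal R) (n : ℕ) : ∃ m, 𝔟 ^ m ⊓ I ≤ 𝔟 ^ n • I := by
  obtain ⟨k, hk⟩ := 𝔟.exists_pow_inf_eq_pow_smul (I : Submodule R R)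
  refine ⟨n + k, ?_⟩
  calc 𝔟 ^ (n + k) ⊓ I = 𝔟 ^ (n + k) • (⊤ : Ideal R) ⊓ I := by rw [smul_eq_mul, Ideal.mul_top]
    _ = 𝔟 ^ n • (𝔟 ^ k • (⊤ : Ideal R) ⊓ I) := by rw [hk _ le_add_self, Nat.add_sub_cancel]
    _ ≤ 𝔟 ^ n • I := Submodule.smul_mono le_rfl inf_le_right

lemma exists_pow_comap_subtype_le_ker {I : Ideal R} (g : I →ₗ[R] powTorsion 𝔟 M) :
    ∃ m, Submodule.comap I.subtype (𝔟 ^ m) ≤ LinearMap.ker g := by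
  have range_fg : (LinearMap.range g).FG := by
    rw [LinearMap.range_eq_map]
    exact (IsNoetherian.noetherian _).map g
  obtain ⟨n, hn⟩ := exists_pow_smul_eq_zero_of_fg range_fg (powTorsion_powTorsion.ge.trans' le_top)
  obtain ⟨m, hm⟩ := exists_pow_inf_le_pow_smul 𝔟 I n
  have pow_smul_le_ker : 𝔟 ^ n • (⊤ : Submodule R I) ≤ LinearMap.ker g :=
    Submodule.smul_le.2 fun r hr y _ ↦ by
      rw [LinearMap.mem_ker, map_smul]
      exact hn r hr _ ⟨y, rfl⟩
  exact ⟨m, fun x hx ↦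
    pow_smul_le_ker ((Submodule.mem_smul_top_iff (𝔟 ^ n) I x).2 (hm ⟨hx, x.2⟩))⟩

-- By Artin–Rees a map `I → Γ_𝔟(E)` factors through the submodule `I/(I ∩ 𝔟^m)` of `R/𝔟^m`, and any
-- extension of it to `R/𝔟^m` lands in `Γ_𝔟(E)`.
lemma baer_powTorsion (𝔟 : Ideal R) {E : Type*} [AddCommGroup E] [Module R E]
    (hE : Module.Baer R E) : Module.Baer R (powTorsion 𝔟 E) := by
  intro I g
  obtain ⟨m, hm⟩ := exists_pow_comap_subtype_le_ker g
  have mapQ_injective : Function.Injective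
      (Submodule.mapQ (Submodule.comap I.subtype (𝔟 ^ m)) _ I.subtype le_rfl) := by
    rw [← LinearMap.ker_eq_bot, Submodule.ker_mapQ, Submodule.mkQ_map_self]
  obtain ⟨h, hh⟩ := hE.extension_property _ mapQ_injective
    ((powTorsion 𝔟 E).subtype ∘ₗ Submodule.liftQ _ g hm)
  have h_mem : ∀ x, h x ∈ powTorsion 𝔟 E :=
    map_mem_powTorsion (powTorsion_quotient_of_pow_le m le_rfl) h
  exact ⟨h.codRestrict _ h_mem ∘ₗ Submodule.mkQ (𝔟 ^ m),
    fun x hx ↦ Subtype.ext (LinearMap.congr_fun hh (Submodule.Quotient.mk ⟨x, hx⟩))⟩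

end PowTorsion

section PowTorsionSequence

lemma shortExact_cokernel {C : Type*} [Category* C] [Abelian C] {X Y : C} (f : X ⟶ Y) [Mono f] :
    (ShortComplex.mk f (cokernel.π f) (cokernel.condition f)).ShortExact where
  exact := ShortComplex.exact_cokernel f

universe v

variable {R : Type u} [CommRing R] (𝔟 : Ideal R)

/-- The sequence `0 ⟶ Γ_𝔟(M) ⟶ M ⟶ M/Γ_𝔟(M) ⟶ 0`. -/
abbrev powTorsionSequence (M : ModuleCat.{v} R) : ShortComplex (ModuleCat.{v} R) where
  X₁ := .of R (powTorsion 𝔟 M)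
  X₂ := M
  X₃ := .of R (M ⧸ powTorsion 𝔟 M)
  f := ModuleCat.ofHom (powTorsion 𝔟 M).subtype
  g := ModuleCat.ofHom (powTorsion 𝔟 M).mkQ
  zero := by
    ext x
    exact (Submodule.Quotient.mk_eq_zero _).2 x.2

lemma shortExact_powTorsionSequence (M : ModuleCat.{v} R) :
    (powTorsionSequence 𝔟 M).ShortExact where
  exact := by
    rw [ShortComplex.moduleCat_exact_iff]
    exact fun x hx ↦ ⟨⟨x, (Submodule.Quotient.mk_eq_zero _).1 hx⟩, rfl⟩
  mono_f := (ModuleCat.mono_iff_injective _).2 (Submodule.subtype_injective _)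
  epi_g := (ModuleCat.epi_iff_surjective _).2 (Submodule.mkQ_surjective _)

/-- The morphism `M/Γ_𝔟(M) ⟶ N/Γ_𝔟(N)` induced by `f : M ⟶ N`. -/
abbrev quotientPowTorsionMap {M N : ModuleCat.{v} R} (f : M ⟶ N) :
    ModuleCat.of R (M ⧸ powTorsion 𝔟 M) ⟶ ModuleCat.of R (N ⧸ powTorsion 𝔟 N) :=
  ModuleCat.ofHom (Submodule.mapQ _ _ f.hom (powTorsion_le_comap f.hom))

instance {M N : ModuleCat.{v} R} (f : M ⟶ N) [hf : Mono f] : Mono (quotientPowTorsionMap 𝔟 f) := by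
  rw [ModuleCat.mono_iff_injective] at hf ⊢
  refine LinearMap.ker_eq_bot.1 ((Submodule.ker_mapQ _ _ _ (powTorsion_le_comap f.hom)).trans ?_)
  exact (congrArg _ (comap_powTorsion_of_injective hf)).trans (Submodule.mkQ_map_self _)

variable [Small.{v} R]

/-- The cokernel of `M/Γ_𝔟(M) ⟶ E/Γ_𝔟(E)`, where `E` is the chosen injective module containing `M`.
It serves for dimension shifting on `M/Γ_𝔟(M)`, with `E/Γ_𝔟(E)` as the acyclic object. -/
noncomputable def torsionFreeCosyzygy (M : ModuleCat.{v} R) : ModuleCat.{v} R :=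
  cokernel (quotientPowTorsionMap 𝔟 (Injective.ι M))

variable [IsNoetherianRing R]

lemma injective_powTorsion (E : ModuleCat.{v} R) [hE : Injective E] :
    Injective (ModuleCat.of R (powTorsion 𝔟 E)) := by
  rw [← Module.injective_iff_injective_object, ← Module.Baer.iff_injective] at hE ⊢
  exact baer_powTorsion 𝔟 hE

variable {𝔟}

lemma exists_mono_injective_of_powTorsion_eq_top {M : ModuleCat.{v} R}
    (hM : powTorsion 𝔟 M = ⊤) :
    ∃ (J : ModuleCat.{v} R) (_ : Injective J) (f : M ⟶ J), Mono f ∧ powTorsion 𝔟 J = ⊤ := by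
  have hι : Function.Injective (Injective.ι M).hom :=
    (ModuleCat.mono_iff_injective _).1 inferInstance
  refine ⟨.of R (powTorsion 𝔟 (Injective.under M :)), injective_powTorsion 𝔟 _,
    ModuleCat.ofHom ((Injective.ι M).hom.codRestrict _ (map_mem_powTorsion hM _)),
    (ModuleCat.mono_iff_injective _).2 ?_, powTorsion_powTorsion⟩
  exact fun x y hxy ↦ hι (congrArg Subtype.val hxy)

end PowTorsionSequence

namespace EffaceableDeltaFunctor

section TorsionFree

universe v

variable {R : Type u} [CommRing R] {D : Type*} [Category* D] [Abelian D]
  (T : EffaceableDeltaFunctor (ModuleCat.{v} R) D) {𝔟 : Ideal R}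

/-- In degree `0` the δ-functor `T` vanishes on modules without `𝔟`-torsion, as `Hom(N, -)` does for
every `𝔟`-torsion module `N`. -/
def VanishesOnTorsionFree (𝔟 : Ideal R) : Prop :=
  ∀ M : ModuleCat.{v} R, powTorsion 𝔟 M = ⊥ → IsZero ((T.functor 0).obj M)

variable {T} [IsNoetherianRing R] [Small.{v} R] (hT : T.VanishesOnTorsionFree 𝔟)
include hT

lemma VanishesOnTorsionFree.isZero_quotient_powTorsion_of_injective (n : ℕ) (E : ModuleCat.{v} R)
    [Injective E] : IsZero ((T.functor n).obj (.of R (E ⧸ powTorsion 𝔟 E))) := by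
  cases n with
  | zero => exact hT _ (powTorsion_quotient_powTorsion 𝔟 E)
  | succ n =>
    have := injective_powTorsion 𝔟 E
    exact T.isZero_X₃ (shortExact_powTorsionSequence 𝔟 E) (n + 1)
      (T.isZero_of_injective n E) (T.isZero_of_injective (n + 1) _)

/-- Dimension shifting along `0 ⟶ M/Γ_𝔟(M) ⟶ E/Γ_𝔟(E) ⟶ torsionFreeCosyzygy 𝔟 M ⟶ 0`. -/
noncomputable def VanishesOnTorsionFree.torsionFreeCosyzygyIso (n : ℕ) (M : ModuleCat.{v} R) :
    (T.functor n).obj (torsionFreeCosyzygy 𝔟 M) ≅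
      (T.functor (n + 1)).obj (.of R (M ⧸ powTorsion 𝔟 M)) :=
  let hS := shortExact_cokernel (quotientPowTorsionMap 𝔟 (Injective.ι M))
  have := T.isIso_δ hS n (hT.isZero_quotient_powTorsion_of_injective n _)
    (hT.isZero_quotient_powTorsion_of_injective (n + 1) _)
  @asIso _ _ _ _ (T.δ hS n) this

end TorsionFree

variable {R : Type u} [CommRing R] {𝔟 : Ideal R}

/-- `Ext^n(N, -)` as a δ-functor. -/
noncomputable abbrev ext (N : ModuleCat.{u} R) :
    EffaceableDeltaFunctor (ModuleCat.{u} R) (ModuleCat.{u} R) :=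
  (extDeltaFunctor R (ModuleCat.{u} R)).comp ((evaluation _ _).obj (op N))

lemma isZero_ext_zero {M N : ModuleCat.{u} R} (h : ∀ f : N ⟶ M, f = 0) :
    IsZero (((Ext R (ModuleCat.{u} R) 0).flip.obj M).obj (op N)) :=
  have : Subsingleton (((linearYoneda R (ModuleCat.{u} R)).obj M).obj (op N)) :=
    ⟨fun f g ↦ (h f).trans (h g).symm⟩
  (ModuleCat.isZero_of_subsingleton _).of_iso
    (((flipExtZeroIso R (ModuleCat.{u} R)).app M).app (op N)).symm

lemma isZero_ext_zero_of_powTorsion {M N : ModuleCat.{u} R} (hN : powTorsion 𝔟 N = ⊤)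
    (hM : powTorsion 𝔟 M = ⊥) : IsZero (((Ext R (ModuleCat.{u} R) 0).flip.obj M).obj (op N)) :=
  isZero_ext_zero fun f ↦ ModuleCat.hom_ext (linearMap_eq_zero_of_powTorsion hN hM f.hom)

lemma vanishesOnTorsionFree_ext {N : ModuleCat.{u} R} (hN : powTorsion 𝔟 N = ⊤) :
    (ext N).VanishesOnTorsionFree 𝔟 :=
  fun _ hM ↦ isZero_ext_zero_of_powTorsion hN hM

end EffaceableDeltaFunctor

section LocalCohomology

variable {R : Type u} [CommRing R] (𝔟 : Ideal R)

instance : HasExactColimitsOfShape ℕᵒᵖᵒᵖ (ModuleCat.{u} R) :=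
  have : AB5OfSize.{0, 0} (ModuleCat.{u} R) := AB5OfSize_of_univLE.{0, 0, u, u} _
  inferInstance

/-- The diagram `k ↦ R/𝔟^k`, as used by `localCohomology`. -/
noncomputable abbrev powQuotients : ℕᵒᵖᵒᵖ ⥤ (ModuleCat.{u} R)ᵒᵖ :=
  (localCohomology.ringModIdeals (localCohomology.idealPowersDiagram 𝔟)).op

/-- The functor sending a presheaf `F` on `R`-modules to the colimit of the modules `F(R/𝔟^k)`. -/
noncomputable abbrev colimPowQuotients :
    ((ModuleCat.{u} R)ᵒᵖ ⥤ ModuleCat.{u} R) ⥤ ModuleCat.{u} R :=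
  (Functor.whiskeringLeft _ _ _).obj (powQuotients 𝔟) ⋙ colim

/-- The local cohomology functors, as a δ-functor. -/
noncomputable def localCohomologyDeltaFunctor :
    EffaceableDeltaFunctor (ModuleCat.{u} R) (ModuleCat.{u} R) :=
  have : PreservesFiniteLimits (colimPowQuotients 𝔟) := comp_preservesFiniteLimits _ _
  (extDeltaFunctor R (ModuleCat.{u} R)).comp (colimPowQuotients 𝔟)

/-- `localCohomology` takes the colimit in the category of functors, `localCohomologyDeltaFunctor`
in the category of modules. -/
noncomputable def localCohomologyObjIso (n : ℕ) (M : ModuleCat.{u} R) :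
    (localCohomology 𝔟 n).obj M ≅ ((localCohomologyDeltaFunctor 𝔟).functor n).obj M :=
  colimitObjIsoColimitCompEvaluation _ _

lemma vanishesOnTorsionFree_localCohomologyDeltaFunctor :
    (localCohomologyDeltaFunctor 𝔟).VanishesOnTorsionFree 𝔟 := fun _ hM ↦
  (colim (J := ℕᵒᵖᵒᵖ) (C := ModuleCat.{u} R)).map_isZero ((Functor.isZero_iff _).2 fun k ↦
    EffaceableDeltaFunctor.isZero_ext_zero_of_powTorsion
      (powTorsion_quotient_of_pow_le (I := 𝔟 ^ k.unop.unop) k.unop.unop le_rfl) hM)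

/-- Evaluation at `1` of homomorphisms out of the modules `R/𝔟^k`. -/
noncomputable def evalOne (M : ModuleCat.{u} R) :
    powQuotients 𝔟 ⋙ (linearYoneda R (ModuleCat.{u} R)).obj M ⟶ (Functor.const _).obj M where
  app k := ModuleCat.ofHom
    { toFun := fun (φ : ModuleCat.of R (R ⧸ 𝔟 ^ k.unop.unop) ⟶ M) ↦ φ.hom (Ideal.Quotient.mk _ 1)
      map_add' := fun _ _ ↦ rfl
      map_smul' := fun _ _ ↦ rfl }
  naturality k l f := by
    ext (φ : ModuleCat.of R (R ⧸ 𝔟 ^ k.unop.unop) ⟶ M)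
    rfl

lemma evalOne_app_injective (M : ModuleCat.{u} R) (k : ℕᵒᵖᵒᵖ) :
    Function.Injective ((evalOne 𝔟 M).app k).hom := by
  intro (φ : ModuleCat.of R (R ⧸ 𝔟 ^ k.unop.unop) ⟶ M)
    (ψ : ModuleCat.of R (R ⧸ 𝔟 ^ k.unop.unop) ⟶ M)
    (h : φ.hom (Ideal.Quotient.mk _ 1) = ψ.hom (Ideal.Quotient.mk _ 1))
  exact ModuleCat.hom_ext (Submodule.linearMap_qext _ (LinearMap.ext_ring h))

lemma exists_evalOne_app_eq {M : ModuleCat.{u} R} {x : M} (hx : x ∈ powTorsion 𝔟 M) :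
    ∃ k φ, ((evalOne 𝔟 M).app k).hom φ = x := by
  obtain ⟨k, hk⟩ := hx
  let φ : ModuleCat.of R (R ⧸ 𝔟 ^ k) ⟶ M :=
    ModuleCat.ofHom (Submodule.liftQ (𝔟 ^ k) (LinearMap.toSpanSingleton R M x) hk)
  exact ⟨op (op k), φ, one_smul R x⟩

/-- The natural map from the colimit of the modules `Hom(R/𝔟^k, M)` to `M`. -/
noncomputable def colimEvalOne : linearYoneda R (ModuleCat.{u} R) ⋙ colimPowQuotients 𝔟 ⟶ 𝟭 _ where
  app M := colimit.desc _ ⟨M, evalOne 𝔟 M⟩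
  naturality M N f := by
    refine colimit.hom_ext (F := powQuotients 𝔟 ⋙ (linearYoneda R (ModuleCat.{u} R)).obj M)
      fun k ↦ ?_
    have ι_map := colimit.ι_map
      (Functor.whiskerLeft (powQuotients 𝔟) ((linearYoneda R (ModuleCat.{u} R)).map f)) k
    have ι_desc_source := colimit.ι_desc ⟨M, evalOne 𝔟 M⟩ k
    have ι_desc_target := colimit.ι_desc ⟨N, evalOne 𝔟 N⟩ k
    exact ((reassoc_of% ι_map) _).trans
      ((congrArg _ ι_desc_target).trans ((reassoc_of% ι_desc_source) f).symm)

variable {𝔟}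

lemma isIso_colimEvalOne_app {M : ModuleCat.{u} R} (hM : powTorsion 𝔟 M = ⊤) :
    IsIso ((colimEvalOne 𝔟).app M) := by
  let F := powQuotients 𝔟 ⋙ (linearYoneda R (ModuleCat.{u} R)).obj M
  have ι_desc (k : ℕᵒᵖᵒᵖ) (φ : F.obj k) :
      ((colimEvalOne 𝔟).app M).hom ((colimit.ι F k).hom φ) = ((evalOne 𝔟 M).app k).hom φ :=
    ConcreteCategory.congr_hom (colimit.ι_desc (F := F) ⟨M, evalOne 𝔟 M⟩ k) φ
  rw [ConcreteCategory.isIso_iff_bijective]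
  constructor
  · refine (injective_iff_map_eq_zero ((colimEvalOne 𝔟).app M).hom).2 fun x hx ↦ ?_
    have : PreservesFilteredColimitsOfSize.{0, 0} (forget (ModuleCat.{u} R)) :=
      preservesFilteredColimitsOfSize_shrink.{0, u, 0, u} _
    obtain ⟨k, φ, rfl⟩ := Concrete.colimit_exists_rep F x
    have hφ : φ = 0 := evalOne_app_injective 𝔟 M k
      ((ι_desc k φ).symm.trans (hx.trans (map_zero _).symm))
    rw [hφ]
    exact map_zero (colimit.ι F k).hom
  · intro x
    obtain ⟨k, φ, rfl⟩ := exists_evalOne_app_eq 𝔟 (hM ▸ Submodule.mem_top : x ∈ powTorsion 𝔟 M)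
    exact ⟨_, ι_desc k φ⟩

variable (𝔟) in
/-- The natural map `H^0_𝔟(M) ⟶ M`. -/
noncomputable def localCohomologyZeroHom : (localCohomologyDeltaFunctor 𝔟).functor 0 ⟶ 𝟭 _ :=
  Functor.whiskerRight (flipExtZeroIso R (ModuleCat.{u} R)).inv (colimPowQuotients 𝔟) ≫
    colimEvalOne 𝔟

lemma isIso_localCohomologyZeroHom_app {M : ModuleCat.{u} R} (hM : powTorsion 𝔟 M = ⊤) :
    IsIso ((localCohomologyZeroHom 𝔟).app M) := by
  have := isIso_colimEvalOne_app hM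
  have : IsIso ((colimPowQuotients 𝔟).map ((flipExtZeroIso R (ModuleCat.{u} R)).inv.app M)) :=
    inferInstance
  exact IsIso.comp_isIso' this ‹_›

lemma epi_localCohomologyDeltaFunctor_zero_map {M N : ModuleCat.{u} R} (hM : powTorsion 𝔟 M = ⊤)
    (f : M ⟶ N) [hf : Epi f] : Epi (((localCohomologyDeltaFunctor 𝔟).functor 0).map f) := by
  have hN : powTorsion 𝔟 N = ⊤ :=
    powTorsion_eq_top_of_surjective hM ((ModuleCat.epi_iff_surjective f).1 hf)
  have := isIso_localCohomologyZeroHom_app hN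
  have epi_app : Epi ((localCohomologyZeroHom 𝔟).app M) :=
    @IsIso.epi_of_iso _ _ _ _ _ (isIso_localCohomologyZeroHom_app hM)
  have epi_map_comp : Epi (((localCohomologyDeltaFunctor 𝔟).functor 0).map f ≫
      (localCohomologyZeroHom 𝔟).app N) := by
    rw [(localCohomologyZeroHom 𝔟).naturality f]
    exact epi_comp _ f
  exact (epi_comp_iff_of_isIso _ ((localCohomologyZeroHom 𝔟).app N)).1 epi_map_comp

variable [IsNoetherianRing R]

lemma isZero_localCohomologyDeltaFunctor_succ {M : ModuleCat.{u} R} (hM : powTorsion 𝔟 M = ⊤)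
    (n : ℕ) : IsZero (((localCohomologyDeltaFunctor 𝔟).functor (n + 1)).obj M) := by
  obtain ⟨J, _, f, _, hJ⟩ := exists_mono_injective_of_powTorsion_eq_top hM
  have epi_map_π : Epi (((localCohomologyDeltaFunctor 𝔟).functor n).map (cokernel.π f)) := by
    cases n with
    | zero => exact epi_localCohomologyDeltaFunctor_zero_map hJ (cokernel.π f)
    | succ n =>
      have hQ : powTorsion 𝔟 (cokernel f :) = ⊤ := powTorsion_eq_top_of_surjective hJ
        ((ModuleCat.epi_iff_surjective (cokernel.π f)).1 inferInstance)
      exact (isZero_localCohomologyDeltaFunctor_succ hQ n).epi _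
  exact (localCohomologyDeltaFunctor 𝔟).isZero_succ_X₁_of_epi (shortExact_cokernel f) n
    ((localCohomologyDeltaFunctor 𝔟).isZero_of_injective n J)

variable (𝔟)

/-- `H^0_𝔟 = Γ_𝔟`. -/
noncomputable def localCohomologyZeroIso (M : ModuleCat.{u} R) :
    (localCohomology 𝔟 0).obj M ≅ .of R (powTorsion 𝔟 M) :=
  have := (localCohomologyDeltaFunctor 𝔟).isIso_zero_map_f (shortExact_powTorsionSequence 𝔟 M)
    (vanishesOnTorsionFree_localCohomologyDeltaFunctor 𝔟 _ (powTorsion_quotient_powTorsion 𝔟 M))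
  have := isIso_localCohomologyZeroHom_app (𝔟 := 𝔟) (M := .of R (powTorsion 𝔟 M))
    powTorsion_powTorsion
  localCohomologyObjIso 𝔟 0 M ≪≫
    (asIso (((localCohomologyDeltaFunctor 𝔟).functor 0).map (powTorsionSequence 𝔟 M).f)).symm ≪≫
      asIso ((localCohomologyZeroHom 𝔟).app (.of R (powTorsion 𝔟 M)))

/-- Dimension shifting for local cohomology: `H^n_𝔟` of the cosyzygy is
`H^{n+1}_𝔟(M/Γ_𝔟(M)) = H^{n+1}_𝔟(M)`. -/
noncomputable def localCohomologyTorsionFreeCosyzygyIso (n : ℕ) (M : ModuleCat.{u} R) :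
    (localCohomology 𝔟 n).obj (torsionFreeCosyzygy 𝔟 M) ≅ (localCohomology 𝔟 (n + 1)).obj M :=
  have := (localCohomologyDeltaFunctor 𝔟).isIso_map_g (shortExact_powTorsionSequence 𝔟 M) (n + 1)
    (isZero_localCohomologyDeltaFunctor_succ powTorsion_powTorsion n)
    (isZero_localCohomologyDeltaFunctor_succ powTorsion_powTorsion (n + 1))
  localCohomologyObjIso 𝔟 n _ ≪≫
    (vanishesOnTorsionFree_localCohomologyDeltaFunctor 𝔟).torsionFreeCosyzygyIso n M ≪≫
      (asIso (((localCohomologyDeltaFunctor 𝔟).functor (n + 1)).map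
        (powTorsionSequence 𝔟 M).g)).symm ≪≫
          (localCohomologyObjIso 𝔟 (n + 1) M).symm

end LocalCohomology

namespace EffaceableDeltaFunctor.VanishesOnTorsionFree

variable {R : Type u} [CommRing R] [IsNoetherianRing R] {𝔟 : Ideal R}
  {D : Type*} [Category* D] [Abelian D] {T : EffaceableDeltaFunctor (ModuleCat.{u} R) D}
  (hT : T.VanishesOnTorsionFree 𝔟) {P : ObjectProperty D} [P.IsSerreClass] (M : ModuleCat.{u} R)
include hT

lemma prop_quotient_powTorsion (n : ℕ)
    (h : ∀ p q, p + q + 1 = n → P ((T.functor p).obj ((localCohomology 𝔟 (q + 1)).obj M))) :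
    P ((T.functor n).obj (.of R (M ⧸ powTorsion 𝔟 M))) := by
  induction n generalizing M with
  | zero => exact P.prop_of_isZero (hT _ (powTorsion_quotient_powTorsion 𝔟 M))
  | succ n ih =>
    let N := torsionFreeCosyzygy 𝔟 M
    have prop_powTorsion : P ((T.functor n).obj (.of R (powTorsion 𝔟 N))) :=
      P.prop_of_iso ((T.functor n).mapIso
        ((localCohomologyTorsionFreeCosyzygyIso 𝔟 0 M).symm ≪≫ localCohomologyZeroIso 𝔟 N))
        (h n 0 rfl)
    have prop_quotient : P ((T.functor n).obj (.of R (N ⧸ powTorsion 𝔟 N))) :=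
      ih N fun p q hpq ↦ P.prop_of_iso
        ((T.functor p).mapIso (localCohomologyTorsionFreeCosyzygyIso 𝔟 (q + 1) M).symm)
        (h p (q + 1) (by lia))
    exact P.prop_of_iso (hT.torsionFreeCosyzygyIso n M)
      (P.prop_X₂_of_exact (T.exact₂ (shortExact_powTorsionSequence 𝔟 N) n)
        prop_powTorsion prop_quotient)

lemma prop_powTorsion (s : ℕ) (h : P ((T.functor s).obj M))
    (h' : ∀ p q, p + q + 2 = s → P ((T.functor p).obj ((localCohomology 𝔟 (q + 1)).obj M))) :
    P ((T.functor s).obj (.of R (powTorsion 𝔟 M))) := by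
  have hS := shortExact_powTorsionSequence 𝔟 M
  cases s with
  | zero =>
    have := hS.mono_f
    exact P.prop_of_mono ((T.functor 0).map (powTorsionSequence 𝔟 M).f) h
  | succ s =>
    exact P.prop_X₂_of_exact (T.exact₁ hS s)
      (hT.prop_quotient_powTorsion M s fun p q hpq ↦ h' p q (by lia)) h

-- In terms of the spectral sequence `T^p(H^q_𝔟(M)) ⇒ T^{p+q}(M)`, the hypotheses concern the
-- abutment in degree `s + t` and the possible targets and sources of differentials at `(s, t)`.
theorem prop_localCohomology (s t : ℕ) (h : P ((T.functor (s + t)).obj M))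
    (h_lt : ∀ p q, p + q = s + t + 1 → q < t →
      P ((T.functor p).obj ((localCohomology 𝔟 q).obj M)))
    (h_gt : ∀ p q, p + q + 1 = s + t → t < q →
      P ((T.functor p).obj ((localCohomology 𝔟 q).obj M))) :
    P ((T.functor s).obj ((localCohomology 𝔟 t).obj M)) := by
  induction t generalizing M with
  | zero =>
    exact P.prop_of_iso ((T.functor s).mapIso (localCohomologyZeroIso 𝔟 M).symm)
      (hT.prop_powTorsion M s h fun p q hpq ↦ h_gt p (q + 1) (by lia) q.succ_pos)
  | succ t ih =>
    let N := torsionFreeCosyzygy 𝔟 M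
    have shift (p q : ℕ) : (T.functor p).obj ((localCohomology 𝔟 q).obj N) ≅
        (T.functor p).obj ((localCohomology 𝔟 (q + 1)).obj M) :=
      (T.functor p).mapIso (localCohomologyTorsionFreeCosyzygyIso 𝔟 q M)
    have prop_powTorsion : P ((T.functor (s + t + 2)).obj (.of R (powTorsion 𝔟 M))) :=
      P.prop_of_iso ((T.functor _).mapIso (localCohomologyZeroIso 𝔟 M))
        (h_lt _ 0 (by lia) t.succ_pos)
    have prop_quotient : P ((T.functor (s + t + 1)).obj (.of R (M ⧸ powTorsion 𝔟 M))) :=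
      P.prop_X₂_of_exact (T.exact₃ (shortExact_powTorsionSequence 𝔟 M) (s + t + 1))
        h prop_powTorsion
    exact P.prop_of_iso (shift s t) (ih N
      (P.prop_of_iso (hT.torsionFreeCosyzygyIso (s + t) M).symm prop_quotient)
      (fun p q hpq hq ↦ P.prop_of_iso (shift p q).symm (h_lt p (q + 1) (by lia) (by lia)))
      (fun p q hpq hq ↦ P.prop_of_iso (shift p q).symm (h_gt p (q + 1) (by lia) (by lia))))

end EffaceableDeltaFunctor.VanishesOnTorsionFree

namespace SerreClass

variable {R : Type u} [CommRing R] (S : SerreClass R)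

/-- A Serre class as a property of objects of the category of `R`-modules. -/
def objectProperty : ObjectProperty (ModuleCat.{u} R) :=
  fun M ↦ S.mem M

lemma mem_iff_of_shortExact {T : ShortComplex (ModuleCat.{u} R)} (hT : T.ShortExact) :
    S.mem T.X₂ ↔ S.mem T.X₁ ∧ S.mem T.X₃ :=
  S.mem_iff_of_ses T.f.hom T.g.hom hT.moduleCat_injective_f hT.moduleCat_surjective_g
    hT.exact.moduleCat_range_eq_ker

lemma mem_of_subsingleton {M : Type u} [AddCommGroup M] [Module R M] (hM : S.mem M)
    (N : Type u) [AddCommGroup N] [Module R N] [Subsingleton N] : S.mem N :=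
  ((S.mem_iff_of_ses (0 : N →ₗ[R] M) LinearMap.id (Function.injective_of_subsingleton _)
    Function.surjective_id (by rw [LinearMap.range_zero, LinearMap.ker_id])).1 hM).1

lemma isSerreClass_objectProperty {M : ModuleCat.{u} R} (hM : S.mem M) :
    S.objectProperty.IsSerreClass where
  exists_zero :=
    ⟨.of R PUnit, ModuleCat.isZero_of_subsingleton _, S.mem_of_subsingleton hM PUnit⟩
  prop_of_mono f _ hY := ((S.mem_iff_of_shortExact (shortExact_cokernel f)).1 hY).1
  prop_of_epi f _ hX :=
    ((S.mem_iff_of_shortExact (T := .mk (kernel.ι f) f (kernel.condition f))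
      { exact := ShortComplex.exact_kernel f }).1 hX).2
  prop_X₂_of_shortExact hT h₁ h₃ := (S.mem_iff_of_shortExact hT).2 ⟨h₁, h₃⟩

end SerreClass

theorem serreClass_mem_ext_localCohomology_general
    {R : Type u} [CommRing R] [IsNoetherianRing R] (S : SerreClass R)
    (𝔟 : Ideal R) (N : ModuleCat.{u} R) (hN : powTorsion 𝔟 N = ⊤) (M : ModuleCat.{u} R) (s t : ℕ)
    (h1 : S.mem (extObj N M (s + t)))
    (h2 : ∀ i : ℕ, 1 ≤ i → i ≤ t →
      S.mem (extObj N ((localCohomology 𝔟 (t - i)).obj M) (s + 1 + i)))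
    (h3 : ∀ i : ℕ, 1 ≤ i → i ≤ s - 1 →
      S.mem (extObj N ((localCohomology 𝔟 (t + i)).obj M) (s - 1 - i))) :
    S.mem (extObj N ((localCohomology 𝔟 t).obj M) s) := by
  have := S.isSerreClass_objectProperty h1
  refine (EffaceableDeltaFunctor.vanishesOnTorsionFree_ext hN).prop_localCohomology
    (P := S.objectProperty) M s t h1 (fun p q hpq hq ↦ ?_) (fun p q hpq hq ↦ ?_)
  · have := h2 (t - q) (by lia) (by lia)
    rwa [show s + 1 + (t - q) = p by lia, show t - (t - q) = q by lia] at this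
  · have := h3 (q - t) (by lia) (by lia)
    rwa [show s - 1 - (q - t) = p by lia, show t + (q - t) = q by lia] at this

/-- Yang–Shen, Lemma 1.3 (module case, `sup X = 0`): if `𝔟 ⊆ 𝔞` are ideals of a commutative
noetherian ring `R`, `S` is a Serre subcategory of the category of `R`-modules, `M` an
`R`-module and `s, t ≥ 0` integers such that
(1) `Ext^{s+t}_R(R/𝔞, M) ∈ S`;
(2) `Ext^{s+1+i}_R(R/𝔞, H^{t-i}_𝔟(M)) ∈ S` for all `1 ≤ i ≤ t`;
(3) `Ext^{s-1-i}_R(R/𝔞, H^{t+i}_𝔟(M)) ∈ S` for all `1 ≤ i ≤ s-1`;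
then `Ext^s_R(R/𝔞, H^t_𝔟(M)) ∈ S`. -/
theorem serreClass_mem_ext_localCohomology
    {R : Type u} [CommRing R] [IsNoetherianRing R] (S : SerreClass R)
    (𝔞 𝔟 : Ideal R) (h𝔟𝔞 : 𝔟 ≤ 𝔞) (M : ModuleCat.{u} R) (s t : ℕ)
    (h1 : S.mem (extIdeal 𝔞 (s + t) M))
    (h2 : ∀ i : ℕ, 1 ≤ i → i ≤ t →
      S.mem (extIdeal 𝔞 (s + 1 + i) ((localCohomology 𝔟 (t - i)).obj M)))
    (h3 : ∀ i : ℕ, 1 ≤ i → i ≤ s - 1 →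
      S.mem (extIdeal 𝔞 (s - 1 - i) ((localCohomology 𝔟 (t + i)).obj M))) :
    S.mem (extIdeal 𝔞 s ((localCohomology 𝔟 t).obj M)) :=
  serreClass_mem_ext_localCohomology_general S 𝔟 _
    (powTorsion_quotient_of_pow_le 1 ((pow_one 𝔟).trans_le h𝔟𝔞)) M s t h1 h2 h3
end

section
/- Let R be a commutative Noetherian ring, S a Serre subcategory of the category of R-modules, 𝔟 ⊆ 𝔞 ideals of R, M an R-module, and t ≥ 0 an integer. If Ext^{s}_R(R/𝔞, M) belongs to S for every s ≥ 0 and Ext^{s}_R(R/𝔞, H^{j}_𝔟(M)) belongs to S for every s ≥ 0 and every j ≥ 0 with j ≠ t, then Ext^{s}_R(R/𝔞, H^{t}_𝔟(M)) belongs to S for every s ≥ 0. -/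
open CategoryTheory

universe u

/-!
Let `M → I` be an injective resolution and `M_j` the quotient of the cocycles of degree `j` of `I`
by the coboundaries of `𝔟`-power torsion elements, so that `M_0 = M`. Sending a cocycle
`f : R/𝔟ⁿ → Iʲ` to `f 1` identifies `H^j_𝔟(M)` with the kernel of `M_j → Iʲ/Γ_𝔟(Iʲ)`, which gives
exact sequences `0 → H^j_𝔟(M) → M_j → Iʲ/Γ_𝔟(Iʲ) → M_{j+1} → 0`.

By Artin–Rees, `Γ_𝔟(Iʲ)` is injective, hence `Ext^s(R/𝔞, Iʲ/Γ_𝔟(Iʲ)) = 0`. So if the `Ext` modules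
of `H^j_𝔟(M)` and `M_j` lie in `S`, then so do those of `M_{j+1}`; this climbs from `M_0 = M` to
`M_t`. For `j > t`, the module `Ext^s(R/𝔞, M_j)` lies in `S` as soon as `Ext^s(R/𝔞, H^j_𝔟(M))` and
`Ext^{s-1}(R/𝔞, M_{j+1})` do, and induction on `s` shows that it does. The sequence for `j = t` then
yields `H^t_𝔟(M)`.
-/

open Abelian

section LinearMap

variable {R M N P : Type*} [Ring R] [AddCommGroup M] [Module R M] [AddCommGroup N] [Module R N]
  [AddCommGroup P] [Module R P] {p : M →ₗ[R] N} {f : M →ₗ[R] P}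

/-- The linear map `N →ₗ[R] P` through which `f : M →ₗ[R] P` factors, for a surjective linear map
`p : M →ₗ[R] N` whose kernel is killed by `f`. -/
noncomputable def descSurjective (p : M →ₗ[R] N) (f : M →ₗ[R] P) (hp : Function.Surjective p)
    (h : LinearMap.ker p ≤ LinearMap.ker f) : N →ₗ[R] P :=
  (LinearMap.ker p).liftQ f h ∘ₗ (p.quotKerEquivOfSurjective hp).symm.toLinearMap

@[simp]
lemma descSurjective_apply (hp : Function.Surjective p)
    (h : LinearMap.ker p ≤ LinearMap.ker f) (x : M) : descSurjective p f hp h (p x) = f x := by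
  simp [descSurjective, LinearMap.quotKerEquivOfSurjective_symm_apply]

lemma descSurjective_injective (hp : Function.Surjective p)
    (h : LinearMap.ker p = LinearMap.ker f) :
    Function.Injective (descSurjective p f hp h.le) := by
  rw [injective_iff_map_eq_zero, hp.forall]
  intro x hx
  rwa [descSurjective_apply, ← LinearMap.mem_ker, ← h] at hx

lemma descSurjective_surjective (hp : Function.Surjective p)
    (h : LinearMap.ker p ≤ LinearMap.ker f) (hf : Function.Surjective f) :
    Function.Surjective (descSurjective p f hp h) := fun y ↦
  (hf y).imp' p fun x hx ↦ (descSurjective_apply hp h x).trans hx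

end LinearMap

section Homology

variable {R : Type*} [Ring R] {ι : Type*} {c : ComplexShape ι}
  (K : HomologicalComplex (ModuleCat R) c)

lemma range_iCycles {i j : ι} (hj : c.next i = j) :
    LinearMap.range (K.iCycles i).hom = LinearMap.ker (K.d i j).hom :=
  (ShortComplex.exact_of_f_is_kernel (.mk _ _ (K.iCycles_d i j))
    (K.cyclesIsKernel i j hj)).moduleCat_range_eq_ker

lemma range_toCycles {i j : ι} (hi : c.prev j = i) :
    LinearMap.range (K.toCycles i j).hom = LinearMap.ker (K.homologyπ j).hom :=
  (ShortComplex.exact_of_g_is_cokernel (.mk _ _ (K.toCycles_comp_homologyπ i j))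
    (K.homologyIsCokernel i j hi)).moduleCat_range_eq_ker

lemma homologyπ_surjective (i : ι) : Function.Surjective (K.homologyπ i).hom :=
  (ModuleCat.epi_iff_surjective _).mp inferInstance

end Homology

section Comparison

variable {R : Type*} [CommRing R] {C : Type*} [Category* C] [Abelian C] [Linear R C]
  [HasExt C] {X X' Y : C}

-- For `n = 0` truncated subtraction makes the differential `d n (n - 1)` the zero morphism `d 0 0`.
lemma projectiveExtMk_eq_zero_iff (P : ProjectiveResolution X) {n : ℕ} (f : P.complex.X n ⟶ Y)
    (hf : P.complex.d (n + 1) n ≫ f = 0) :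
    P.extMk f (n + 1) rfl hf = 0 ↔
      ∃ g : P.complex.X (n - 1) ⟶ Y, P.complex.d n (n - 1) ≫ g = f := by
  cases n with
  | zero =>
    simp only [← P.extEquivCohomologyClass.apply_eq_iff_eq,
      ProjectiveResolution.extEquivCohomologyClass_extMk,
      ProjectiveResolution.extEquivCohomologyClass_zero,
      CochainComplex.HomComplex.CohomologyClass.mk_eq_zero_iff]
    rw [CochainComplex.HomComplex.Cocycle.toSingleMk_mem_coboundaries_iff _ _ _ _ _ 1 (by simp)]
    have hd : P.cochainComplex.d (-(0 : ℕ)) 1 = 0 :=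
      (CochainComplex.isZero_of_isStrictlyLE _ 0 1).eq_of_tgt _ _
    rw [hd, P.complex.shape _ _ (by simp)]
    simp [eq_comm (a := (0 : P.complex.X 0 ⟶ Y)),
      eq_comm (a := (0 : P.cochainComplex.X (-(0 : ℕ)) ⟶ Y))]
  | succ n => exact P.extMk_eq_zero_iff f (n + 2) rfl hf n rfl

lemma injectiveExtMk_eq_zero_iff (I : InjectiveResolution Y) {n : ℕ} (f : X ⟶ I.cocomplex.X n)
    (hf : f ≫ I.cocomplex.d n (n + 1) = 0) :
    I.extMk f (n + 1) rfl hf = 0 ↔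
      ∃ g : X ⟶ I.cocomplex.X (n - 1), g ≫ I.cocomplex.d (n - 1) n = f := by
  cases n with
  | zero =>
    simp only [← I.extEquivCohomologyClass.apply_eq_iff_eq,
      InjectiveResolution.extEquivCohomologyClass_extMk,
      InjectiveResolution.extEquivCohomologyClass_zero,
      CochainComplex.HomComplex.CohomologyClass.mk_eq_zero_iff]
    rw [CochainComplex.HomComplex.Cocycle.fromSingleMk_mem_coboundaries_iff _ _ _ _ _
      (-1) (by simp)]
    have hd : I.cochainComplex.d (-1) (0 : ℕ) = 0 :=
      (CochainComplex.isZero_of_isStrictlyGE _ 0 (-1)).eq_of_src _ _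
    rw [hd, I.cocomplex.shape _ _ (by simp)]
    simp [eq_comm (a := (0 : X ⟶ I.cocomplex.X 0)),
      eq_comm (a := (0 : X ⟶ I.cochainComplex.X (0 : ℕ)))]
  | succ n => exact I.extMk_eq_zero_iff f (n + 2) rfl hf n rfl

lemma smul_injectiveExtMk (I : InjectiveResolution Y) {n : ℕ} (r : R) (f : X ⟶ I.cocomplex.X n)
    (hf : f ≫ I.cocomplex.d n (n + 1) = 0) :
    r • I.extMk f (n + 1) rfl hf = I.extMk (r • f) (n + 1) rfl (by simp [hf]) := by
  have := I.mk₀_comp_extMk f (n + 1) rfl hf (r • 𝟙 X)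
  simpa [Ext.mk₀_smul] using this

lemma smul_projectiveExtMk (P : ProjectiveResolution X) {n : ℕ} (r : R) (f : P.complex.X n ⟶ Y)
    (hf : P.complex.d (n + 1) n ≫ f = 0) :
    r • P.extMk f (n + 1) rfl hf = P.extMk (r • f) (n + 1) rfl (by simp [hf]) := by
  have := P.extMk_comp_mk₀ f (n + 1) rfl hf (r • 𝟙 Y)
  simpa [Ext.mk₀_smul] using this

/-- The module of cocycles of degree `n` in the complex of morphisms from `X` to an injective
resolution. -/
noncomputable def injectiveCocycles (R : Type*) [CommRing R] [Linear R C]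
    (I : InjectiveResolution Y) (X : C) (n : ℕ) : Submodule R (X ⟶ I.cocomplex.X n) :=
  LinearMap.ker (Linear.rightComp R X (I.cocomplex.d n (n + 1)))

/-- The map sending a cocycle of degree `n` in the complex of morphisms from `X` to an injective
resolution of `Y` to its class in `Ext X Y n`. -/
noncomputable def injectiveCocyclesToExt (R : Type*) [CommRing R] [Linear R C]
    (I : InjectiveResolution Y) (X : C) (n : ℕ) :
    injectiveCocycles R I X n →ₗ[R] Abelian.Ext X Y n where
  toFun f := I.extMk f (n + 1) rfl f.2
  map_add' _ _ := (I.add_extMk _ _ _ _ _ _).symm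
  map_smul' _ _ := (smul_injectiveExtMk I _ _ _).symm

lemma injectiveCocyclesToExt_surjective (I : InjectiveResolution Y) (X : C) (n : ℕ) :
    Function.Surjective (injectiveCocyclesToExt R I X n) := fun x ↦
  let ⟨f, hf, hfx⟩ := I.extMk_surjective x (n + 1) rfl
  ⟨⟨f, hf⟩, hfx⟩

lemma mem_ker_injectiveCocyclesToExt (I : InjectiveResolution Y) {n : ℕ}
    (f : injectiveCocycles R I X n) :
    f ∈ LinearMap.ker (injectiveCocyclesToExt R I X n) ↔
      ∃ g : X ⟶ I.cocomplex.X (n - 1), g ≫ I.cocomplex.d (n - 1) n = f :=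
  injectiveExtMk_eq_zero_iff I _ f.2

omit [HasExt C] in
lemma comp_mem_injectiveCocycles (I : InjectiveResolution Y) {n : ℕ} (φ : X ⟶ X')
    {f : X' ⟶ I.cocomplex.X n} (hf : f ∈ injectiveCocycles R I X' n) :
    φ ≫ f ∈ injectiveCocycles R I X n :=
  (Category.assoc _ _ _).trans ((congrArg (φ ≫ ·) hf).trans Limits.comp_zero)

lemma mk₀_comp_injectiveCocyclesToExt (I : InjectiveResolution Y) {n : ℕ} (φ : X ⟶ X')
    (f : injectiveCocycles R I X' n) :
    (Ext.mk₀ φ).comp (injectiveCocyclesToExt R I X' n f) (zero_add n) =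
      injectiveCocyclesToExt R I X n ⟨φ ≫ f, comp_mem_injectiveCocycles I φ f.2⟩ :=
  I.mk₀_comp_extMk f.1 (n + 1) rfl f.2 φ

omit [HasExt C] in
lemma d_comp_iCycles (P : ProjectiveResolution X) (n : ℕ)
    (z : (P.complex.linearYonedaObj R Y).cycles n) :
    P.complex.d (n + 1) n ≫ (P.complex.linearYonedaObj R Y).iCycles n z = 0 :=
  ConcreteCategory.congr_hom ((P.complex.linearYonedaObj R Y).iCycles_d n (n + 1)) z

variable (R) in
/-- The map sending a cocycle of degree `n` in the complex of morphisms from a projective resolution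
of `X` to `Y` to its class in `Ext X Y n`. -/
noncomputable def projectiveCyclesToExt (P : ProjectiveResolution X) (Y : C) (n : ℕ) :
    (P.complex.linearYonedaObj R Y).cycles n →ₗ[R] Abelian.Ext X Y n where
  toFun z := P.extMk ((P.complex.linearYonedaObj R Y).iCycles n z) (n + 1) rfl
    (d_comp_iCycles P n z)
  map_add' _ _ := by
    simp only [map_add]
    exact (P.add_extMk _ _ _ _ _ _).symm
  map_smul' _ _ := by
    simp only [map_smul]
    exact (smul_projectiveExtMk P _ _ _).symm

lemma projectiveCyclesToExt_surjective (P : ProjectiveResolution X) (Y : C) (n : ℕ) :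
    Function.Surjective (projectiveCyclesToExt R P Y n) := by
  intro x
  obtain ⟨f, hf, rfl⟩ := P.extMk_surjective x (n + 1) rfl
  obtain ⟨z, rfl⟩ : f ∈ LinearMap.range ((P.complex.linearYonedaObj R Y).iCycles n).hom :=
    (range_iCycles _ (by simp : (ComplexShape.up ℕ).next n = n + 1)).ge hf
  exact ⟨z, rfl⟩

lemma ker_projectiveCyclesToExt (P : ProjectiveResolution X) (Y : C) (n : ℕ) :
    LinearMap.ker (projectiveCyclesToExt R P Y n) =
      LinearMap.ker ((P.complex.linearYonedaObj R Y).homologyπ n).hom := by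
  let K := P.complex.linearYonedaObj R Y
  have hprev : (ComplexShape.up ℕ).prev n = n - 1 := by cases n <;> simp
  have hi : Function.Injective (K.iCycles n) :=
    (ModuleCat.mono_iff_injective _).mp inferInstance
  ext z
  rw [← range_toCycles K hprev]
  refine (projectiveExtMk_eq_zero_iff P _ (d_comp_iCycles P n z)).trans (exists_congr fun g ↦ ?_)
  rw [← hi.eq_iff, ← show K.iCycles n (K.toCycles (n - 1) n g) = P.complex.d n (n - 1) ≫ g from
    ConcreteCategory.congr_hom (K.toCycles_i (n - 1) n) g]
  rfl

variable (R) in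
/-- The linear equivalence between the cohomology of the complex of morphisms from a projective
resolution of `X` to `Y` and `Ext X Y n`. -/
noncomputable def projectiveHomologyLinearEquiv (P : ProjectiveResolution X) (Y : C) (n : ℕ) :
    (P.complex.linearYonedaObj R Y).homology n ≃ₗ[R] Abelian.Ext X Y n :=
  .ofBijective
    (descSurjective ((P.complex.linearYonedaObj R Y).homologyπ n).hom
      (projectiveCyclesToExt R P Y n) (homologyπ_surjective _ n)
      (ker_projectiveCyclesToExt P Y n).ge)
    ⟨descSurjective_injective _ (ker_projectiveCyclesToExt P Y n).symm,
      descSurjective_surjective _ _ (projectiveCyclesToExt_surjective P Y n)⟩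

lemma projectiveHomologyLinearEquiv_homologyπ (P : ProjectiveResolution X) (Y : C) (n : ℕ)
    (z : (P.complex.linearYonedaObj R Y).cycles n) :
    projectiveHomologyLinearEquiv R P Y n ((P.complex.linearYonedaObj R Y).homologyπ n z) =
      projectiveCyclesToExt R P Y n z :=
  descSurjective_apply _ (ker_projectiveCyclesToExt P Y n).ge z

/-- The morphism of complexes of morphisms to `Y` induced by a morphism of projective
resolutions. -/
noncomputable def linearYonedaHom (R : Type*) [CommRing R] [Linear R C]
    {P : ProjectiveResolution X} {P' : ProjectiveResolution X'} {g : X ⟶ X'}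
    (φ : ProjectiveResolution.Hom P P' g) (Y : C) :
    P'.complex.linearYonedaObj R Y ⟶ P.complex.linearYonedaObj R Y :=
  (HomologicalComplex.unopFunctor _ _).map
    (((((linearYoneda R C).obj Y).rightOp.mapHomologicalComplex _).map φ.hom).op)

lemma projectiveHomologyLinearEquiv_homologyMap {P : ProjectiveResolution X}
    {P' : ProjectiveResolution X'} {g : X ⟶ X'} (φ : ProjectiveResolution.Hom P P' g) (n : ℕ)
    (x : (P'.complex.linearYonedaObj R Y).homology n) :
    projectiveHomologyLinearEquiv R P Y n
        (HomologicalComplex.homologyMap (linearYonedaHom R φ Y) n x) =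
      (Ext.mk₀ g).comp (projectiveHomologyLinearEquiv R P' Y n x) (zero_add n) := by
  obtain ⟨z, rfl⟩ := homologyπ_surjective _ n x
  let ψ := linearYonedaHom R φ Y
  have hπ : HomologicalComplex.homologyMap ψ n ((P'.complex.linearYonedaObj R Y).homologyπ n z) =
      (P.complex.linearYonedaObj R Y).homologyπ n (HomologicalComplex.cyclesMap ψ n z) :=
    ConcreteCategory.congr_hom (HomologicalComplex.homologyπ_naturality ψ n) z
  have hi : (P.complex.linearYonedaObj R Y).iCycles n (HomologicalComplex.cyclesMap ψ n z) =
      φ.hom.f n ≫ (P'.complex.linearYonedaObj R Y).iCycles n z :=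
    ConcreteCategory.congr_hom (HomologicalComplex.cyclesMap_i ψ n) z
  have hz := d_comp_iCycles P' n z
  calc
    _ = projectiveCyclesToExt R P Y n (HomologicalComplex.cyclesMap ψ n z) :=
      (congrArg _ hπ).trans (projectiveHomologyLinearEquiv_homologyπ P Y n _)
    _ = P.extMk (φ.hom.f n ≫ (P'.complex.linearYonedaObj R Y).iCycles n z) (n + 1) rfl
          ((φ.hom.comm_assoc _ _ _).symm.trans ((congrArg _ hz).trans Limits.comp_zero)) := by
      simp only [projectiveCyclesToExt, LinearMap.coe_mk, AddHom.coe_mk, hi]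
    _ = (Ext.mk₀ g).comp (projectiveCyclesToExt R P' Y n z) (zero_add n) :=
      (ProjectiveResolution.mk₀_comp_extMk _ (n + 1) rfl hz φ).symm
    _ = _ := by rw [← projectiveHomologyLinearEquiv_homologyπ]

omit [HasExt C] in
lemma isoExt_hom_naturality [EnoughProjectives C] {P : ProjectiveResolution X}
    {P' : ProjectiveResolution X'} {g : X ⟶ X'} (φ : ProjectiveResolution.Hom P P' g) (n : ℕ) :
    ((_root_.Ext R C n).map g.op).app Y ≫ (P.isoExt n Y).hom =
      (P'.isoExt n Y).hom ≫ HomologicalComplex.homologyMap (linearYonedaHom R φ Y) n := by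
  -- `isoExt` is composed of `isoLeftDerivedObj` and `homologyOp`, each of which is natural.
  let F := ((linearYoneda R C).obj Y).rightOp
  have hderived := congrArg Quiver.Hom.unop (ProjectiveResolution.isoLeftDerivedObj_inv_naturality
    g P P' φ.hom (by simpa using φ.hom_f_zero_comp_π_f_zero) F n)
  have hhomologyOp := congrArg Quiver.Hom.unop (CommSq.mk
    (HomologicalComplex.homologyOp_hom_naturality (linearYonedaHom R φ Y) n)).vert_inv.w.symm
  exact ((Category.assoc _ _ _).symm.trans
    (congrArg (· ≫ (HomologicalComplex.homologyOp (P.complex.linearYonedaObj R Y) n).inv.unop)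
      hderived)).trans ((Category.assoc _ _ _).trans
    ((congrArg ((P'.isoLeftDerivedObj F n).inv.unop ≫ ·) hhomologyOp).trans
      (Category.assoc _ _ _).symm))

variable [EnoughProjectives C]

variable (R) in
/-- The linear equivalence between `Ext` defined as a derived functor and `Abelian.Ext`. -/
noncomputable def extLinearEquiv (X Y : C) (n : ℕ) :
    ((_root_.Ext R C n).obj (Opposite.op X)).obj Y ≃ₗ[R] Abelian.Ext X Y n :=
  ((projectiveResolution X).isoExt n Y).toLinearEquiv ≪≫ₗ
    projectiveHomologyLinearEquiv R (projectiveResolution X) Y n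

lemma extLinearEquiv_map (g : X ⟶ X') (Y : C) (n : ℕ)
    (x : ((_root_.Ext R C n).obj (Opposite.op X')).obj Y) :
    extLinearEquiv R X Y n (((_root_.Ext R C n).map g.op).app Y x) =
      (Ext.mk₀ g).comp (extLinearEquiv R X' Y n x) (zero_add n) := by
  let φ : ProjectiveResolution.Hom (projectiveResolution X) (projectiveResolution X') g :=
    { hom := ProjectiveResolution.lift g _ _
      hom_f_zero_comp_π_f_zero :=
        (ProjectiveResolution.lift_commutes_zero g _ _).trans (by simp) }
  have h := ConcreteCategory.congr_hom (isoExt_hom_naturality (R := R) (Y := Y) φ n) x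
  exact (congrArg _ h).trans (projectiveHomologyLinearEquiv_homologyMap φ n _)

end Comparison

section PowerTorsion

variable {R : Type*} [CommRing R] {M N : Type*} [AddCommGroup M] [Module R M] [AddCommGroup N]
  [Module R N] {I : Ideal R}

/-- The `I`-power torsion submodule `Γ_I(M)` of `M`: the elements annihilated by a power
of `I`. -/
def powerTorsion (I : Ideal R) (M : Type*) [AddCommGroup M] [Module R M] : Submodule R M where
  carrier := {x | ∃ n : ℕ, ∀ r ∈ I ^ n, r • x = 0}
  zero_mem' := ⟨0, by simp⟩
  add_mem' := by
    rintro x y ⟨m, hm⟩ ⟨n, hn⟩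
    refine ⟨m + n, fun r hr ↦ ?_⟩
    rw [smul_add, hm r (Ideal.pow_le_pow_right (Nat.le_add_right m n) hr),
      hn r (Ideal.pow_le_pow_right (Nat.le_add_left n m) hr), add_zero]
  smul_mem' := by
    rintro c x ⟨n, hn⟩
    exact ⟨n, fun r hr ↦ by rw [smul_comm, hn r hr, smul_zero]⟩

lemma map_mem_powerTorsion (f : M →ₗ[R] N) {x : M} (hx : x ∈ powerTorsion I M) :
    f x ∈ powerTorsion I N :=
  hx.imp fun n hn r hr ↦ by rw [← map_smul, hn r hr, map_zero]

lemma exists_pow_le_annihilator {L : Submodule R M} (hL : L.FG) (h : L ≤ powerTorsion I M) :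
    ∃ n : ℕ, I ^ n ≤ L.annihilator := by
  induction L, hL using Submodule.fg_induction with
  | singleton x =>
    obtain ⟨n, hn⟩ := h (Submodule.mem_span_singleton_self x)
    exact ⟨n, fun r hr ↦ (Submodule.mem_annihilator_span_singleton x r).mpr (hn r hr)⟩
  | sup L₁ L₂ _ _ ih₁ ih₂ =>
    obtain ⟨m, hm⟩ := ih₁ (le_sup_left.trans h)
    obtain ⟨n, hn⟩ := ih₂ (le_sup_right.trans h)
    refine ⟨m ⊔ n, ?_⟩
    rw [Submodule.annihilator_sup]
    exact le_inf ((Ideal.pow_le_pow_right le_sup_left).trans hm)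
      ((Ideal.pow_le_pow_right le_sup_right).trans hn)

lemma exists_comap_subtype_pow_le_ker [IsNoetherianRing R] {J : Ideal R} (g : J →ₗ[R] M) {n : ℕ}
    (hg : I ^ n ≤ (LinearMap.range g).annihilator) :
    ∃ k : ℕ, Submodule.comap J.subtype (I ^ k) ≤ LinearMap.ker g := by
  obtain ⟨k, hk⟩ := I.exists_pow_inf_eq_pow_smul (M := R) J
  refine ⟨n + k, fun x hx ↦ ?_⟩
  have hx' : (x : R) ∈ I ^ n • J := by
    have h := hk (n + k) (Nat.le_add_left k n)
    rw [Nat.add_sub_cancel] at h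
    exact (h.le.trans (smul_mono_right _ inf_le_right)) ⟨by simpa using hx, x.2⟩
  refine Submodule.smul_le.mpr (fun r hr y _ ↦ ?_)
    ((Submodule.mem_smul_top_iff (I ^ n) J x).mpr hx')
  rw [LinearMap.mem_ker, map_smul]
  exact Submodule.mem_annihilator.mp (hg hr) _ ⟨y, rfl⟩

end PowerTorsion

instance injective_powerTorsion {R : Type u} [CommRing R] [IsNoetherianRing R]
    (I : Ideal R) (E : Type u) [AddCommGroup E] [Module R E] [Module.Injective R E] :
    Module.Injective R (powerTorsion I E) := by
  refine Module.Baer.injective fun J g ↦ ?_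
  have hrange : LinearMap.range ((powerTorsion I E).subtype ∘ₗ g) ≤ powerTorsion I E := by
    rintro _ ⟨x, rfl⟩
    exact (g x).2
  obtain ⟨n, hn⟩ := exists_pow_le_annihilator (Module.Finite.iff_fg.mp inferInstance) hrange
  obtain ⟨k, hk⟩ := exists_comap_subtype_pow_le_ker _ hn
  obtain ⟨h, hh⟩ := Module.Injective.out
    (Submodule.mapQ (Submodule.comap J.subtype (I ^ k)) (I ^ k) J.subtype le_rfl)
    (LinearMap.ker_eq_bot.mp (by simp [Submodule.mapQ, Submodule.ker_liftQ, LinearMap.ker_comp]))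
    (Submodule.liftQ _ _ hk)
  refine ⟨LinearMap.codRestrict (powerTorsion I E) (h ∘ₗ (I ^ k).mkQ) fun r ↦
    map_mem_powerTorsion h ⟨k, fun s hs ↦ ?_⟩, fun x hx ↦
    Subtype.ext (hh (Submodule.Quotient.mk ⟨x, hx⟩))⟩
  rw [← map_smul, Submodule.mkQ_apply, Submodule.Quotient.mk_eq_zero]
  exact Ideal.mul_mem_right r _ hs

section Ext

variable {R : Type u} [CommRing R]

lemma subsingleton_ext_quotient_powerTorsion [IsNoetherianRing R] {I : Ideal R}
    (X : ModuleCat.{u} R) (hX : powerTorsion I X = ⊤) (E : ModuleCat.{u} R) [Injective E]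
    (s : ℕ) :
    Subsingleton (Abelian.Ext X (ModuleCat.of R (E ⧸ powerTorsion I E)) s) := by
  have : Module.Injective R E := Module.injective_module_of_injective_object R E
  have : Injective (ModuleCat.of R (powerTorsion I E)) :=
    Module.injective_object_of_injective_module R _
  have hT := ModuleCat.shortComplex_shortExact
    (ModuleCat.shortComplexOfCompEqZero (powerTorsion I E).subtype (powerTorsion I E).mkQ
      (LinearMap.exact_subtype_mkQ _).linearMap_comp_eq_zero)
    (LinearMap.exact_subtype_mkQ _) (Submodule.injective_subtype _) (Submodule.mkQ_surjective _)
  refine subsingleton_of_forall_eq 0 fun x ↦ ?_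
  obtain ⟨y, rfl⟩ := Ext.covariant_sequence_exact₃ X hT x rfl (Ext.eq_zero_of_injective _)
  cases s with
  | zero =>
    obtain ⟨y, rfl⟩ := (Ext.mk₀_bijective _ _).surjective y
    rw [Ext.mk₀_comp_mk₀, ← Ext.mk₀_zero]
    congr 1
    ext x
    exact (Submodule.Quotient.mk_eq_zero _).mpr
      (map_mem_powerTorsion y.hom (hX.ge (Submodule.mem_top (x := x))))
  | succ s => rw [Ext.eq_zero_of_injective y, Ext.zero_comp]

end Ext

section Exact

variable {C : Type*} [Category* C] [Abelian C] {R : Type*} [CommRing R] [Linear R C] [HasExt C]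
  {T : ShortComplex C} (hT : T.ShortExact) (X : C)

include hT

variable (R) in
lemma exact_postcomp_f_postcomp_g (n : ℕ) :
    Function.Exact ((Ext.mk₀ T.f).postcompOfLinear R X (add_zero n))
      ((Ext.mk₀ T.g).postcompOfLinear R X (add_zero n)) := fun x ↦
  ⟨fun hx ↦ Ext.covariant_sequence_exact₂ X hT x hx, by
    rintro ⟨y, rfl⟩
    change (y.comp (Ext.mk₀ T.f) (add_zero n)).comp (Ext.mk₀ T.g) (add_zero n) = 0
    simp⟩

variable (R) in
lemma exact_postcomp_g_postcomp_extClass (n : ℕ) :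
    Function.Exact ((Ext.mk₀ T.g).postcompOfLinear R X (add_zero n))
      (hT.extClass.postcompOfLinear R X (rfl : n + 1 = n + 1)) := fun x ↦
  ⟨fun hx ↦ Ext.covariant_sequence_exact₃ X hT x rfl hx, by
    rintro ⟨y, rfl⟩
    change (y.comp (Ext.mk₀ T.g) (add_zero n)).comp hT.extClass rfl = 0
    simp⟩

variable (R) in
lemma exact_postcomp_extClass_postcomp_f (n : ℕ) :
    Function.Exact (hT.extClass.postcompOfLinear R X (rfl : n + 1 = n + 1))
      ((Ext.mk₀ T.f).postcompOfLinear R X (add_zero (n + 1))) := fun x ↦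
  ⟨fun hx ↦ Ext.covariant_sequence_exact₁ X hT x hx rfl, by
    rintro ⟨y, rfl⟩
    change (y.comp hT.extClass rfl).comp (Ext.mk₀ T.f) (add_zero _) = 0
    simp⟩

end Exact

/-- Exactness of a sequence `0 → H → M → E → M' → 0` of linear maps. -/
structure FourTermExact {R H M E M' : Type*} [Ring R] [AddCommGroup H] [Module R H]
    [AddCommGroup M] [Module R M] [AddCommGroup E] [Module R E] [AddCommGroup M'] [Module R M']
    (f : H →ₗ[R] M) (g : M →ₗ[R] E) (h : E →ₗ[R] M') : Prop where
  injective : Function.Injective f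
  exact_left : Function.Exact f g
  exact_right : Function.Exact g h
  surjective : Function.Surjective h

namespace FourTermExact

variable {R : Type*} [Ring R] {H M E M' : Type u} [AddCommGroup H] [Module R H]
  [AddCommGroup M] [Module R M] [AddCommGroup E] [Module R E] [AddCommGroup M'] [Module R M']
  {f : H →ₗ[R] M} {g : M →ₗ[R] E} {h : E →ₗ[R] M'} (hex : FourTermExact f g h)

include hex

lemma exact_rangeRestrict : Function.Exact f g.rangeRestrict :=
  LinearMap.exact_iff.mpr
    (g.ker_rangeRestrict.trans hex.exact_left.linearMap_ker_eq)

lemma exact_range_subtype : Function.Exact (LinearMap.range g).subtype h :=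
  LinearMap.exact_iff.mpr
    (hex.exact_right.linearMap_ker_eq.trans (Submodule.range_subtype _).symm)

lemma shortExact_rangeRestrict :
    (ModuleCat.shortComplexOfCompEqZero f g.rangeRestrict
      hex.exact_rangeRestrict.linearMap_comp_eq_zero).ShortExact :=
  ModuleCat.shortComplex_shortExact _ hex.exact_rangeRestrict hex.injective
    g.surjective_rangeRestrict

lemma shortExact_range_subtype :
    (ModuleCat.shortComplexOfCompEqZero (LinearMap.range g).subtype h
      hex.exact_range_subtype.linearMap_comp_eq_zero).ShortExact :=
  ModuleCat.shortComplex_shortExact _ hex.exact_range_subtype (Submodule.injective_subtype _)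
    hex.surjective

end FourTermExact

namespace SerreClass

variable {R : Type u} [CommRing R] (S : SerreClass R)

section Mem

variable {L M N : Type u} [AddCommGroup L] [Module R L] [AddCommGroup M] [Module R M]
  [AddCommGroup N] [Module R N]

variable {S} in
lemma mem_of_injective {f : L →ₗ[R] M} (hf : Function.Injective f) (hM : S.mem M) : S.mem L :=
  ((S.mem_iff_of_ses f (LinearMap.range f).mkQ hf (Submodule.mkQ_surjective _)
    (Submodule.ker_mkQ _).symm).mp hM).1

variable {S} in
lemma mem_of_surjective {g : M →ₗ[R] N} (hg : Function.Surjective g) (hM : S.mem M) : S.mem N :=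
  ((S.mem_iff_of_ses (LinearMap.ker g).subtype g (Submodule.subtype_injective _) hg
    (Submodule.range_subtype _)).mp hM).2

lemma mem_congr (e : L ≃ₗ[R] M) : S.mem L ↔ S.mem M :=
  ⟨mem_of_surjective (g := e.toLinearMap) e.surjective,
    mem_of_injective (f := e.toLinearMap) e.injective⟩

variable {S} in
lemma mem_of_exact {f : L →ₗ[R] M} {g : M →ₗ[R] N} (hfg : Function.Exact f g)
    (hL : S.mem L) (hN : S.mem N) : S.mem M :=
  (S.mem_iff_of_ses (LinearMap.range f).subtype g.rangeRestrict (Submodule.subtype_injective _)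
    g.surjective_rangeRestrict
    (by rw [Submodule.range_subtype, LinearMap.ker_rangeRestrict, hfg.linearMap_ker_eq])).mpr
    ⟨mem_of_surjective f.surjective_rangeRestrict hL,
      mem_of_injective (Submodule.subtype_injective (LinearMap.range g)) hN⟩

end Mem

/-- The condition that `Ext X M s` belongs to the Serre class `S` for every `s`. -/
def ExtMem (X M : ModuleCat.{u} R) : Prop :=
  ∀ s : ℕ, S.mem (Abelian.Ext X M s)

variable {S} {X : ModuleCat.{u} R}

lemma ext_zero_mem_of_mono {L M : ModuleCat.{u} R} (i : L ⟶ M) [Mono i]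
    (hM : S.mem (Abelian.Ext X M 0)) : S.mem (Abelian.Ext X L 0) :=
  mem_of_injective (f := (Ext.mk₀ i).postcompOfLinear R X (add_zero 0))
    (Ext.postcomp_mk₀_injective_of_mono X i) hM

lemma ExtMem.of_iso {M N : ModuleCat.{u} R} (e : M ≅ N) (hM : S.ExtMem X M) : S.ExtMem X N :=
  fun s ↦ mem_of_surjective (g := (Ext.mk₀ e.hom).postcompOfLinear R X (add_zero s))
    (fun y ↦ ⟨y.comp (Ext.mk₀ e.inv) (add_zero s), by
      change (y.comp (Ext.mk₀ e.inv) (add_zero s)).comp (Ext.mk₀ e.hom) (add_zero s) = y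
      simp⟩) (hM s)

lemma ExtMem.of_subsingleton {M N : ModuleCat.{u} R}
    (hM : ∀ s, Subsingleton (Abelian.Ext X M s)) (hN : S.ExtMem X N) : S.ExtMem X M := fun s ↦
  have := hM s
  mem_of_injective (f := (0 : Abelian.Ext X M s →ₗ[R] Abelian.Ext X N s))
    (Function.injective_of_subsingleton _) (hN s)

section FourTermExact

variable {H M E M' : ModuleCat.{u} R} {f : H →ₗ[R] M} {g : M →ₗ[R] E} {h : E →ₗ[R] M'}

lemma ext_range_mem (hex : FourTermExact f g h) (hE : S.ExtMem X E) {s : ℕ}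
    (hM' : ∀ m, m + 1 = s → S.mem (Abelian.Ext X M' m)) :
    S.mem (Abelian.Ext X (ModuleCat.of R (LinearMap.range g)) s) := by
  cases s with
  | zero =>
    have := hex.shortExact_range_subtype.mono_f
    exact ext_zero_mem_of_mono (ModuleCat.ofHom (LinearMap.range g).subtype) (hE 0)
  | succ s =>
    exact mem_of_exact (exact_postcomp_extClass_postcomp_f R hex.shortExact_range_subtype X s)
      (hM' s rfl) (hE _)

lemma ext_domain_mem (hex : FourTermExact f g h) (hE : S.ExtMem X E) {s : ℕ}
    (hH : S.mem (Abelian.Ext X H s)) (hM' : ∀ m, m + 1 = s → S.mem (Abelian.Ext X M' m)) :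
    S.mem (Abelian.Ext X M s) :=
  mem_of_exact (exact_postcomp_f_postcomp_g R hex.shortExact_rangeRestrict X s) hH
    (ext_range_mem hex hE hM')

lemma ExtMem.kernel (hex : FourTermExact f g h) (hE : S.ExtMem X E) (hM : S.ExtMem X M)
    (hM' : S.ExtMem X M') : S.ExtMem X H
  | 0 =>
    have : Mono (ModuleCat.ofHom f) := hex.shortExact_rangeRestrict.mono_f
    ext_zero_mem_of_mono (ModuleCat.ofHom f) (hM 0)
  | s + 1 =>
    mem_of_exact (exact_postcomp_extClass_postcomp_f R hex.shortExact_rangeRestrict X s)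
      (ext_range_mem hex hE fun m _ ↦ hM' m) (hM _)

lemma ExtMem.cokernel (hex : FourTermExact f g h) (hE : S.ExtMem X E) (hH : S.ExtMem X H)
    (hM : S.ExtMem X M) : S.ExtMem X M' := fun s ↦
  mem_of_exact (exact_postcomp_g_postcomp_extClass R hex.shortExact_range_subtype X s) (hE s)
    (mem_of_exact (exact_postcomp_g_postcomp_extClass R hex.shortExact_rangeRestrict X (s + 1))
      (hM _) (hH _))

end FourTermExact

section Tower

variable {H M E : ℕ → ModuleCat.{u} R} {f : ∀ j, H j →ₗ[R] M j} {g : ∀ j, M j →ₗ[R] E j}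
  {h : ∀ j, E j →ₗ[R] M (j + 1)} (hex : ∀ j, FourTermExact (f j) (g j) (h j))
  (hE : ∀ j, S.ExtMem X (E j)) {t : ℕ}

include hex hE

lemma extMem_of_extMem_lt (hM : S.ExtMem X (M 0)) (hH : ∀ j < t, S.ExtMem X (H j)) :
    S.ExtMem X (M t) := by
  induction t with
  | zero => exact hM
  | succ t ih =>
    exact .cokernel (hex t) (hE t) (hH t t.lt_succ_self)
      (ih fun j hj ↦ hH j (hj.trans t.lt_succ_self))

-- The connecting maps lower the `Ext` degree while raising the index of `M`, so it is the degree
-- that carries the induction.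
lemma extMem_of_extMem_ge (hH : ∀ j ≥ t, S.ExtMem X (H j)) : S.ExtMem X (M t) := by
  intro s
  induction s generalizing t with
  | zero => exact ext_domain_mem (hex t) (hE t) (hH t le_rfl 0) (by simp)
  | succ s ih =>
    refine ext_domain_mem (hex t) (hE t) (hH t le_rfl _) fun m hm ↦ ?_
    obtain rfl : m = s := by omega
    exact ih fun j hj ↦ hH j (by omega)

lemma extMem_of_forall_ne (hM : S.ExtMem X (M 0)) (hH : ∀ j ≠ t, S.ExtMem X (H j)) :
    S.ExtMem X (H t) :=
  .kernel (hex t) (hE t) (extMem_of_extMem_lt hex hE hM fun j hj ↦ hH j hj.ne)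
    (extMem_of_extMem_ge hex hE fun j hj ↦ hH j (by omega))

end Tower

end SerreClass

section PreservedColimit

open Limits

variable {R : Type*} [Ring R] {J : Type*} [Category* J] {F : J ⥤ ModuleCat R}
  [PreservesColimit F (forget (ModuleCat R))] {c s : Cocone F} (hc : IsColimit c)

lemma range_isColimit_desc :
    LinearMap.range (hc.desc s).hom = ⨆ j, LinearMap.range (s.ι.app j).hom := by
  refine le_antisymm ?_ (iSup_le fun j ↦ ?_)
  · rintro _ ⟨y, rfl⟩
    obtain ⟨j, x, rfl⟩ := Concrete.isColimit_exists_rep F hc y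
    exact Submodule.mem_iSup_of_mem j ⟨x, (ConcreteCategory.congr_hom (hc.fac s j) x).symm⟩
  · rintro _ ⟨x, rfl⟩
    exact ⟨c.ι.app j x, ConcreteCategory.congr_hom (hc.fac s j) x⟩

lemma isColimit_desc_injective
    (hs : ∀ j (x : F.obj j), s.ι.app j x = 0 → ∃ (k : J) (φ : j ⟶ k), F.map φ x = 0) :
    Function.Injective (hc.desc s).hom := by
  refine (injective_iff_map_eq_zero _).mpr fun y hy ↦ ?_
  obtain ⟨j, x, rfl⟩ := Concrete.isColimit_exists_rep F hc y
  obtain ⟨k, φ, hφ⟩ := hs j x ((ConcreteCategory.congr_hom (hc.fac s j) x).symm.trans hy)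
  exact (ConcreteCategory.congr_hom (c.w φ) x).symm.trans
    ((congrArg (c.ι.app k) hφ).trans (map_zero (c.ι.app k).hom))

end PreservedColimit

section TorsionTruncation

variable {R : Type u} [CommRing R] (I : Ideal R) (K : CochainComplex (ModuleCat.{u} R) ℕ)
  (j : ℕ)

/-- The images in degree `j` of the `I`-power torsion cochains of degree `j - 1`. In degree `0`,
truncated subtraction gives the image under the differential `d 0 0 = 0`. -/
def torsionCoboundaries : Submodule R (LinearMap.ker (K.d j (j + 1)).hom) :=
  ((powerTorsion I (K.X (j - 1))).map (K.d (j - 1) j).hom).comap (Submodule.subtype _)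

/-- The cohomology in degree `j` of `Γ_I(K⁰) → ⋯ → Γ_I(Kʲ⁻¹) → Kʲ → Kʲ⁺¹ → ⋯`: the cocycles of
degree `j` modulo the coboundaries of `I`-power torsion cochains. -/
abbrev torsionTruncatedCohomology : Type u :=
  LinearMap.ker (K.d j (j + 1)).hom ⧸ torsionCoboundaries I K j

variable {I K j} in
lemma mem_torsionCoboundaries {z : LinearMap.ker (K.d j (j + 1)).hom} :
    z ∈ torsionCoboundaries I K j ↔ ∃ x ∈ powerTorsion I (K.X (j - 1)), K.d (j - 1) j x = z :=
  Iff.rfl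

namespace torsionTruncatedCohomology

/-- The map to the cochains of degree `j` modulo power torsion induced by the inclusion of the
cocycles. -/
def toQuotient :
    torsionTruncatedCohomology I K j →ₗ[R] K.X j ⧸ powerTorsion I (K.X j) :=
  Submodule.mapQ _ _ (Submodule.subtype _) fun z hz ↦ by
    obtain ⟨x, hx, hxz⟩ := mem_torsionCoboundaries.mp hz
    change (z : K.X j) ∈ powerTorsion I (K.X j)
    rw [← hxz]
    exact map_mem_powerTorsion (K.d (j - 1) j).hom hx

/-- The map from the cochains of degree `j` modulo power torsion induced by the differential. -/
def ofQuotient :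
    (K.X j ⧸ powerTorsion I (K.X j)) →ₗ[R] torsionTruncatedCohomology I K (j + 1) :=
  Submodule.mapQ _ _
    (LinearMap.codRestrict _ (K.d j (j + 1)).hom fun x ↦
      ConcreteCategory.congr_hom (K.d_comp_d j (j + 1) (j + 1 + 1)) x)
    fun x hx ↦ mem_torsionCoboundaries.mpr ⟨x, hx, rfl⟩

lemma exact_toQuotient_ofQuotient :
    Function.Exact (toQuotient I K j)
      (ofQuotient I K j) := by
  intro y
  obtain ⟨x, rfl⟩ := Submodule.mkQ_surjective _ y
  constructor
  · intro hx
    obtain ⟨(w : K.X j), hw, hwx⟩ :=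
      mem_torsionCoboundaries.mp ((Submodule.Quotient.mk_eq_zero _).mp hx)
    refine ⟨Submodule.Quotient.mk ⟨x - w, ?_⟩, ?_⟩
    · exact (map_sub (K.d j (j + 1)).hom x w).trans (sub_eq_zero.mpr hwx.symm)
    · refine (Submodule.Quotient.eq _).mpr ?_
      simpa using hw
  · rintro ⟨z, hz⟩
    obtain ⟨z, rfl⟩ := Submodule.mkQ_surjective _ z
    rw [← hz]
    refine (Submodule.Quotient.mk_eq_zero _).mpr (mem_torsionCoboundaries.mpr ⟨0, zero_mem _, ?_⟩)
    exact (map_zero _).trans z.2.symm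

variable {K j} in
lemma ofQuotient_surjective (hK : K.ExactAt (j + 1)) :
    Function.Surjective (ofQuotient I K j) := by
  intro y
  obtain ⟨z, rfl⟩ := Submodule.mkQ_surjective _ y
  obtain ⟨x, hx⟩ := ((K.exactAt_iff' j (j + 1) (j + 1 + 1) (by simp) (by simp)).mp
    hK).moduleCat_range_eq_ker.ge z.2
  exact ⟨Submodule.Quotient.mk x, congrArg (Submodule.mkQ _) (Subtype.ext hx)⟩

end torsionTruncatedCohomology

end TorsionTruncation

section Resolution

open torsionTruncatedCohomology

variable {R : Type u} [CommRing R] {M X X' : ModuleCat.{u} R} (I : Ideal R)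
  (K : InjectiveResolution M)

/-- The map `M → ker (K⁰ → K¹)`, with target read as the truncated cohomology in degree `0`. -/
noncomputable def augmentation : M ⟶ ModuleCat.of R (torsionTruncatedCohomology I K.cocomplex 0) :=
  ModuleCat.ofHom (Submodule.mkQ _ ∘ₗ LinearMap.codRestrict _ (K.ι.f 0).hom fun m ↦
      ConcreteCategory.congr_hom K.ι_f_zero_comp_complex_d m)

instance : IsIso (augmentation I K) := by
  refine (ConcreteCategory.isIso_iff_bijective _).mpr ⟨?_, fun y ↦ ?_⟩
  · refine (injective_iff_map_eq_zero (augmentation I K).hom).mpr fun m hm ↦ ?_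
    obtain ⟨x, -, hx⟩ := mem_torsionCoboundaries.mp ((Submodule.Quotient.mk_eq_zero _).mp hm)
    have hι : Function.Injective (K.ι.f 0).hom :=
      (ModuleCat.mono_iff_injective (K.ι.f 0)).mp inferInstance
    have hd : K.cocomplex.d (0 - 1) 0 = 0 := K.cocomplex.shape _ _ (by simp)
    exact hι ((hx.symm.trans (ConcreteCategory.congr_hom hd x)).trans (map_zero _).symm)
  · obtain ⟨z, rfl⟩ := Submodule.mkQ_surjective _ y
    obtain ⟨m, hm⟩ := (ShortComplex.exact_of_f_is_kernel (.mk _ _ K.ι_f_zero_comp_complex_d)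
      K.isLimitKernelFork).moduleCat_range_eq_ker.ge z.2
    exact ⟨m, congrArg (Submodule.mkQ _) (Subtype.ext hm)⟩

variable {I}

/-- The map sending a cocycle `f : X ⟶ Kʲ` to the class of `f x`, for an `I`-power torsion element
`x` of `X`. -/
noncomputable def evalCocycle (x : powerTorsion I X) (j : ℕ) :
    injectiveCocycles R K X j →ₗ[R] torsionTruncatedCohomology I K.cocomplex j where
  toFun f := Submodule.Quotient.mk ⟨f.1 x, ConcreteCategory.congr_hom f.2 (x : X)⟩
  map_add' _ _ := rfl
  map_smul' _ _ := rfl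

lemma ker_injectiveCocyclesToExt_le (x : powerTorsion I X) (j : ℕ) :
    LinearMap.ker (injectiveCocyclesToExt R K X j) ≤ LinearMap.ker (evalCocycle K x j) := by
  intro f hf
  obtain ⟨g, hg⟩ := (mem_ker_injectiveCocyclesToExt K f).mp hf
  exact (Submodule.Quotient.mk_eq_zero _).mpr (mem_torsionCoboundaries.mpr
    ⟨g x, map_mem_powerTorsion g.hom x.2, ConcreteCategory.congr_hom hg (x : X)⟩)

/-- The map on `Ext X M j` induced by evaluating cocycles at the `I`-power torsion element `x`. -/
noncomputable def extEval (x : powerTorsion I X) (j : ℕ) :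
    Abelian.Ext X M j →ₗ[R] torsionTruncatedCohomology I K.cocomplex j :=
  descSurjective (injectiveCocyclesToExt R K X j) (evalCocycle K x j)
    (injectiveCocyclesToExt_surjective K X j) (ker_injectiveCocyclesToExt_le K x j)

lemma extEval_injectiveCocyclesToExt (x : powerTorsion I X) (j : ℕ)
    (f : injectiveCocycles R K X j) :
    extEval K x j (injectiveCocyclesToExt R K X j f) = evalCocycle K x j f :=
  descSurjective_apply _ _ f

lemma extEval_mk₀_comp (φ : X ⟶ X') (x : powerTorsion I X) (x' : powerTorsion I X')
    (hx : φ x = x') (j : ℕ) (e : Abelian.Ext X' M j) :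
    extEval K x j ((Ext.mk₀ φ).comp e (zero_add j)) = extEval K x' j e := by
  obtain ⟨f, rfl⟩ := injectiveCocyclesToExt_surjective (R := R) K X' j e
  rw [mk₀_comp_injectiveCocyclesToExt, extEval_injectiveCocyclesToExt,
    extEval_injectiveCocyclesToExt]
  refine congrArg (Submodule.mkQ _) (Subtype.ext ?_)
  exact congrArg f.1 hx

lemma toQuotient_extEval (x : powerTorsion I X) (j : ℕ) (e : Abelian.Ext X M j) :
    toQuotient I K.cocomplex j (extEval K x j e) = 0 := by
  obtain ⟨f, rfl⟩ := injectiveCocyclesToExt_surjective (R := R) K X j e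
  rw [extEval_injectiveCocyclesToExt]
  exact (Submodule.Quotient.mk_eq_zero _).mpr (map_mem_powerTorsion f.1.hom x.2)

end Resolution

section QuotientPow

variable {R : Type u} [CommRing R] (I : Ideal R) {N : ModuleCat.{u} R}

/-- The generator `1` of `R ⧸ I ^ n`, as an `I`-power torsion element. -/
def quotientPowOne (n : ℕ) : powerTorsion I (R ⧸ I ^ n) :=
  ⟨Submodule.Quotient.mk 1, n, fun r hr ↦
    (Submodule.Quotient.mk_eq_zero _).mpr (by simpa using hr)⟩

/-- The projection from `R ⧸ I ^ m` to `R ⧸ I ^ n`. -/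
def quotientPowMap {n m : ℕ} (h : n ≤ m) :
    ModuleCat.of R (R ⧸ I ^ m) ⟶ ModuleCat.of R (R ⧸ I ^ n) :=
  ModuleCat.ofHom (Submodule.mapQ _ _ LinearMap.id (Ideal.pow_le_pow_right h))

lemma quotientPowMap_quotientPowOne {n m : ℕ} (h : n ≤ m) :
    quotientPowMap I h (quotientPowOne I m : R ⧸ I ^ m) = (quotientPowOne I n : R ⧸ I ^ n) :=
  rfl

variable {I}

lemma hom_ext_quotientPowOne {n : ℕ} {f g : ModuleCat.of R (R ⧸ I ^ n) ⟶ N}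
    (h : f (quotientPowOne I n : R ⧸ I ^ n) = g (quotientPowOne I n : R ⧸ I ^ n)) : f = g :=
  ModuleCat.hom_ext (Submodule.linearMap_qext _ (LinearMap.ext_ring h))

lemma exists_hom_quotientPowOne_eq {n : ℕ} {y : N} (hy : ∀ r ∈ I ^ n, r • y = 0) :
    ∃ f : ModuleCat.of R (R ⧸ I ^ n) ⟶ N, f (quotientPowOne I n : R ⧸ I ^ n) = y :=
  ⟨ModuleCat.ofHom (Submodule.liftQ (I ^ n) (LinearMap.toSpanSingleton R N y) hy), one_smul R y⟩

end QuotientPow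

section LocalCohomology

open torsionTruncatedCohomology

variable {R : Type u} [CommRing R] {M : ModuleCat.{u} R} {I : Ideal R}
  (K : InjectiveResolution M)

lemma exists_extEval_quotientPowOne_eq {j : ℕ} {y : torsionTruncatedCohomology I K.cocomplex j}
    (hy : toQuotient I K.cocomplex j y = 0) :
    ∃ (n : ℕ) (e : Abelian.Ext (ModuleCat.of R (R ⧸ I ^ n)) M j),
      extEval K (quotientPowOne I n) j e = y := by
  obtain ⟨z, rfl⟩ := Submodule.mkQ_surjective _ y
  obtain ⟨n, hn⟩ := (Submodule.Quotient.mk_eq_zero _).mp hy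
  obtain ⟨f, hf⟩ := exists_hom_quotientPowOne_eq hn
  have hfd : f ∈ injectiveCocycles R K _ j :=
    hom_ext_quotientPowOne ((congrArg (K.cocomplex.d j (j + 1)) hf).trans z.2)
  refine ⟨n, injectiveCocyclesToExt R K _ j ⟨f, hfd⟩, ?_⟩
  rw [extEval_injectiveCocyclesToExt]
  exact congrArg (Submodule.mkQ _) (Subtype.ext hf)

lemma exists_quotientPowMap_comp_eq_zero {n j : ℕ}
    {e : Abelian.Ext (ModuleCat.of R (R ⧸ I ^ n)) M j}
    (he : extEval K (quotientPowOne I n) j e = 0) :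
    ∃ (m : ℕ) (h : n ≤ m), (Ext.mk₀ (quotientPowMap I h)).comp e (zero_add j) = 0 := by
  obtain ⟨f, rfl⟩ := injectiveCocyclesToExt_surjective (R := R) K _ j e
  rw [extEval_injectiveCocyclesToExt] at he
  obtain ⟨x, ⟨m, hm⟩, hx⟩ := mem_torsionCoboundaries.mp ((Submodule.Quotient.mk_eq_zero _).mp he)
  obtain ⟨g, hg⟩ := exists_hom_quotientPowOne_eq (n := n ⊔ m) (I := I) (y := x) fun r hr ↦
    hm r (Ideal.pow_le_pow_right le_sup_right hr)
  refine ⟨n ⊔ m, le_sup_left, ?_⟩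
  rw [mk₀_comp_injectiveCocyclesToExt]
  refine (mem_ker_injectiveCocyclesToExt K _).mpr ⟨g, hom_ext_quotientPowOne ?_⟩
  exact (congrArg (K.cocomplex.d (j - 1) j) hg).trans hx

variable (I)

/-- The cocone on the diagram defining local cohomology given by evaluating cocycles at the
generators of the modules `R ⧸ I ^ n`. -/
noncomputable def extEvalCocone (j : ℕ) :
    Limits.Cocone (localCohomology.diagram (localCohomology.idealPowersDiagram I) j ⋙
      (evaluation _ _).obj M) where
  pt := ModuleCat.of R (torsionTruncatedCohomology I K.cocomplex j)
  ι.app n := ModuleCat.ofHom (extEval K (quotientPowOne I n.unop.unop) j ∘ₗ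
    (extLinearEquiv R (ModuleCat.of R (R ⧸ I ^ n.unop.unop)) M j).toLinearMap)
  ι.naturality n m φ := by
    ext x
    exact (congrArg _ (extLinearEquiv_map (quotientPowMap I φ.unop.unop.le) M j x)).trans
      (extEval_mk₀_comp K _ _ _
        (quotientPowMap_quotientPowOne I φ.unop.unop.le) j _)

/-- The map from local cohomology to the truncated cohomology given by evaluating cocycles at the
generators of the modules `R ⧸ I ^ n`. -/
noncomputable def localCohomologyToTorsionTruncated (j : ℕ) :
    (localCohomology I j).obj M ⟶ ModuleCat.of R (torsionTruncatedCohomology I K.cocomplex j) :=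
  (Limits.isColimitOfPreserves ((evaluation _ _).obj M) (Limits.colimit.isColimit _)).desc
    (extEvalCocone I K j)

instance : Limits.PreservesColimitsOfShape ℕᵒᵖᵒᵖ (forget (ModuleCat.{u} R)) :=
  (Limits.preservesSmallestFilteredColimits_of_preservesFilteredColimits
    (forget (ModuleCat.{u} R))).preserves_filtered_colimits _

lemma localCohomologyToTorsionTruncated_injective (j : ℕ) :
    Function.Injective (localCohomologyToTorsionTruncated I K j).hom := by
  refine isColimit_desc_injective _ fun n x hx ↦ ?_
  obtain ⟨m, h, hm⟩ := exists_quotientPowMap_comp_eq_zero K hx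
  exact ⟨.op (.op m), (homOfLE h).op.op, (extLinearEquiv R _ M j).injective
    ((extLinearEquiv_map _ M j x).trans (hm.trans (map_zero _).symm))⟩

lemma range_localCohomologyToTorsionTruncated (j : ℕ) :
    LinearMap.range (localCohomologyToTorsionTruncated I K j).hom =
      LinearMap.ker (toQuotient I K.cocomplex j) := by
  refine (range_isColimit_desc _).trans (le_antisymm (iSup_le fun n ↦ ?_) fun y hy ↦ ?_)
  · rintro _ ⟨x, rfl⟩
    exact toQuotient_extEval K _ j _
  · obtain ⟨n, e, rfl⟩ := exists_extEval_quotientPowOne_eq K hy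
    obtain ⟨x, rfl⟩ := (extLinearEquiv R (ModuleCat.of R (R ⧸ I ^ n)) M j).surjective e
    exact Submodule.mem_iSup_of_mem (.op (.op n)) ⟨x, rfl⟩

lemma fourTermExact_localCohomology (j : ℕ) :
    FourTermExact (localCohomologyToTorsionTruncated I K j).hom
      (toQuotient I K.cocomplex j) (ofQuotient I K.cocomplex j) where
  injective := localCohomologyToTorsionTruncated_injective I K j
  exact_left := LinearMap.exact_iff.mpr (range_localCohomologyToTorsionTruncated I K j).symm
  exact_right := exact_toQuotient_ofQuotient I K.cocomplex j
  surjective := ofQuotient_surjective I (K.cocomplex_exactAt_succ j)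

end LocalCohomology

lemma powerTorsion_quotient_eq_top {R : Type*} [CommRing R] {I J : Ideal R} (h : I ≤ J) :
    powerTorsion I (R ⧸ J) = ⊤ := by
  refine eq_top_iff.mpr fun x _ ↦ ⟨1, fun r hr ↦ ?_⟩
  obtain ⟨a, rfl⟩ := Ideal.Quotient.mk_surjective x
  exact (Submodule.Quotient.mk_eq_zero J).mpr (J.mul_mem_right a (h (by simpa using hr)))

lemma SerreClass.extMem_iff_forall_extObj_mem {R : Type u} [CommRing R] {S : SerreClass R}
    {X M : ModuleCat.{u} R} : S.ExtMem X M ↔ ∀ s, S.mem (extObj X M s) :=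
  forall_congr' fun s ↦ S.mem_congr (extLinearEquiv R X M s).symm

theorem serreClass_mem_ext_localCohomology_of_ne_general
    {R : Type u} [CommRing R] [IsNoetherianRing R] (S : SerreClass R) (𝔟 : Ideal R)
    (X : ModuleCat.{u} R) (hX : powerTorsion 𝔟 X = ⊤) (M : ModuleCat.{u} R) (t : ℕ)
    (h1 : ∀ s : ℕ, S.mem (extObj X M s))
    (h2 : ∀ (s j : ℕ), j ≠ t → S.mem (extObj X ((localCohomology 𝔟 j).obj M) s)) :
    ∀ s : ℕ, S.mem (extObj X ((localCohomology 𝔟 t).obj M) s) := by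
  let K := injectiveResolution M
  have hM : S.ExtMem X M := SerreClass.extMem_iff_forall_extObj_mem.mpr h1
  have hE : ∀ j, S.ExtMem X (.of R (K.cocomplex.X j ⧸ powerTorsion 𝔟 (K.cocomplex.X j))) := by
    intro j
    have := K.injective j
    exact .of_subsingleton (subsingleton_ext_quotient_powerTorsion X hX _) hM
  exact SerreClass.extMem_iff_forall_extObj_mem.mp
    (SerreClass.extMem_of_forall_ne (H := fun j ↦ (localCohomology 𝔟 j).obj M)
      (M := fun j ↦ .of R (torsionTruncatedCohomology 𝔟 K.cocomplex j))
      (fourTermExact_localCohomology 𝔟 K) hE (hM.of_iso (asIso (augmentation 𝔟 K)))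
      fun j hj ↦ SerreClass.extMem_iff_forall_extObj_mem.mpr fun s ↦ h2 s j hj)

/-- Yang–Shen, Corollary 1.2 (module case): if all `Ext` modules of `M` against `R/𝔞` lie in a
Serre class `S`, and all `Ext^s_R(R/𝔞, H^j_𝔟(M))` lie in `S` for `j ≠ t`, then also
`Ext^s_R(R/𝔞, H^t_𝔟(M)) ∈ S` for all `s`. -/
theorem serreClass_mem_ext_localCohomology_of_ne
    {R : Type u} [CommRing R] [IsNoetherianRing R] (S : SerreClass R)
    (𝔞 𝔟 : Ideal R) (h𝔟𝔞 : 𝔟 ≤ 𝔞) (M : ModuleCat.{u} R) (t : ℕ)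
    (h1 : ∀ s : ℕ, S.mem (extIdeal 𝔞 s M))
    (h2 : ∀ (s j : ℕ), j ≠ t → S.mem (extIdeal 𝔞 s ((localCohomology 𝔟 j).obj M))) :
    ∀ s : ℕ, S.mem (extIdeal 𝔞 s ((localCohomology 𝔟 t).obj M)) :=
  serreClass_mem_ext_localCohomology_of_ne_general S 𝔟 (.of R (R ⧸ 𝔞))
    (powerTorsion_quotient_eq_top h𝔟𝔞) M t h1 h2
end
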